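/- arXiv:2308.01055 — 4 statements merged into one kernel-verified Lean document; each statement's English description precedes it below -/
import Mathlib

section
/- For every β > 0 and every ε ∈ ℝ^{N_o}, the minimum of J(µ) = (1/2)‖Kµ − z^d(ε)‖_{Σ₀^{-1}}² + β‖µ‖_M over µ ∈ M(Ω_s) equals the infimum over N ∈ ℕ, y ∈ Ω_s^N and q ∈ ℝ^N of (1/2)‖Σ_{n=1}^N q_n (k(x_j, y_n))_{j=1}^{N_o} − z^d(ε)‖_{Σ₀^{-1}}² + β‖q‖₁. Moreover, for any triple (N̄, ȳ, q̄) with pairwise distinct points ȳ_1, …, ȳ_{N̄} ∈ Ω_s, the triple minimizes the parametrized problem if and only if the measure µ̄ = Σ_{n=1}^{N̄} q̄_n δ_{ȳ_n} minimizes J; and J admits at least one minimizer of this sparse form with N̄ ≤ N_o. -/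
/-!
Write `φ y = (k (x j) y)_j`, a continuous map from the compact set `Ωs` to `ℝ^No`. Both functionals
have the form `F (…) + β · mass` with the same continuous data term `F ≥ 0`, and they coincide on
sparse measures with distinct points, because there the Jordan decomposition merely splits the
coefficients by sign (`jordan_sparseSub`).

The parametrized functional attains its minimum. If the vectors `φ (y n)` are linearly dependent,
one moves the coefficients along a linear relation, in the direction in which the `ℓ¹`-norm does
not increase, until one of them vanishes; the data term is unchanged. Iterating leaves linearly
independent vectors, hence at most `No` distinct points (`exists_reduced`). With `No` points the
functional is continuous and coercive in the coefficients, so a minimizer exists, and it can be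
reduced in the same way (`exists_sparse_min`).

The measure functional lies above this minimum `m`. For a signed measure `μ = μ⁺ - μ⁻` with masses
`s` and `t`, `Kμ = s a - t b` with `a`, `b` in the closed convex hull of `φ(Ωs)`. For `a`, `b` in the
convex hull itself, `F (s a - t b) + β (s + t) ≥ m` since `s a - t b` is a finite combination with
`ℓ¹`-norm `s + t`, and the closure follows by continuity of `F` (`le_of_forall_parObj`). So the
two problems have the same attained minimum, and the remaining claims follow.
-/

open MeasureTheory

noncomputable section

/-- Integral of a function against a signed measure, via the Jordan decomposition. -/
def sInt {α : Type*} [MeasurableSpace α] (μ : SignedMeasure α) (f : α → ℝ) : ℝ :=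
  (∫ a, f a ∂μ.toJordanDecomposition.posPart) - ∫ a, f a ∂μ.toJordanDecomposition.negPart

/-- Total variation norm of a signed measure. -/
def mnorm {α : Type*} [MeasurableSpace α] (μ : SignedMeasure α) : ℝ :=
  (μ.totalVariation Set.univ).toReal

/-- The sparse measure `Σ_n q_n δ_{y_n}`. -/
def sparseSub {α : Type*} [MeasurableSpace α] {N : ℕ} (q : Fin N → ℝ) (y : Fin N → α) :
    SignedMeasure α :=
  ∑ n, q n • (Measure.dirac (y n)).toSignedMeasure

/-- The source-to-measurement operator `(Kμ)_j = ∫ k(x_j, y) dμ(y)`. -/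
def Kop {d dO No : ℕ} (Ωs : Set (EuclideanSpace ℝ (Fin d)))
    (k : EuclideanSpace ℝ (Fin dO) → EuclideanSpace ℝ (Fin d) → ℝ)
    (x : Fin No → EuclideanSpace ℝ (Fin dO)) (μ : SignedMeasure Ωs) : Fin No → ℝ :=
  fun j => sInt μ fun y => k (x j) ↑y

/-- The Tikhonov functional `J(μ) = ½‖Kμ − z‖²_{Σ₀⁻¹} + β‖μ‖_M`. -/
def Jfun {d dO No : ℕ} (Ωs : Set (EuclideanSpace ℝ (Fin d)))
    (k : EuclideanSpace ℝ (Fin dO) → EuclideanSpace ℝ (Fin d) → ℝ)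
    (x : Fin No → EuclideanSpace ℝ (Fin dO)) (σ0 : Fin No → ℝ)
    (z : Fin No → ℝ) (β : ℝ) (μ : SignedMeasure Ωs) : ℝ :=
  (1 / 2) * ∑ j, (Kop Ωs k x μ j - z j) ^ 2 / σ0 j + β * mnorm μ


/-- The parametrized (finite-dimensional) Tikhonov functional
`(N, y, q) ↦ ½‖Σ_n q_n k(x_·, y_n) − z‖²_{Σ₀⁻¹} + β‖q‖₁`. -/
def Jpar {d dO No : ℕ} (Ωs : Set (EuclideanSpace ℝ (Fin d)))
    (k : EuclideanSpace ℝ (Fin dO) → EuclideanSpace ℝ (Fin d) → ℝ)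
    (x : Fin No → EuclideanSpace ℝ (Fin dO)) (σ0 : Fin No → ℝ)
    (z : Fin No → ℝ) (β : ℝ) (N : ℕ) (y : Fin N → Ωs) (q : Fin N → ℝ) : ℝ :=
  (1 / 2) * ∑ j, ((∑ n, q n * k (x j) ↑(y n)) - z j) ^ 2 / σ0 j + β * ∑ n, |q n|

/-! ### Reduction of finite atomic combinations -/

/-- Carathéodory-type reduction: a finite combination of values of `φ` can be rewritten with at
most `finrank ℝ E` pairwise distinct points without increasing the `ℓ¹`-norm of the coefficients.
The points kept have linearly independent images, which yields both the bound on their number and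
their distinctness. -/
lemma exists_reduced {α E : Type*} [AddCommGroup E] [Module ℝ E] [Module.Finite ℝ E] (φ : α → E)
    (N : ℕ) : ∀ (y : Fin N → α) (q : Fin N → ℝ),
      ∃ N' ≤ Module.finrank ℝ E, ∃ (y' : Fin N' → α) (q' : Fin N' → ℝ), Function.Injective y' ∧
        ∑ n, q' n • φ (y' n) = ∑ n, q n • φ (y n) ∧ ∑ n, |q' n| ≤ ∑ n, |q n| := by
  induction N with
  | zero => exact fun y q => ⟨0, Nat.zero_le _, y, q, fun i => i.elim0, rfl, le_rfl⟩
  | succ N ih =>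
    intro y q
    by_cases hli : LinearIndependent ℝ (φ ∘ y)
    · refine ⟨N + 1, ?_, y, q, hli.injective.of_comp, rfl, le_rfl⟩
      simpa using hli.fintype_card_le_finrank
    -- A combination with a vanishing coefficient is handled by the induction hypothesis.
    have drop : ∀ (p : Fin (N + 1) → ℝ) (i : Fin (N + 1)), p i = 0 →
        ∑ n, p n • φ (y n) = ∑ n, q n • φ (y n) → ∑ n, |p n| ≤ ∑ n, |q n| →
        ∃ N' ≤ Module.finrank ℝ E, ∃ (y' : Fin N' → α) (q' : Fin N' → ℝ),
          Function.Injective y' ∧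
          ∑ n, q' n • φ (y' n) = ∑ n, q n • φ (y n) ∧ ∑ n, |q' n| ≤ ∑ n, |q n| := by
      intro p i hi h1 h2
      obtain ⟨N', hN', y', q', hinj, e1, e2⟩ :=
        ih (fun n => y (i.succAbove n)) (fun n => p (i.succAbove n))
      refine ⟨N', hN', y', q', hinj, ?_, ?_⟩
      · rw [e1, ← h1, Fin.sum_univ_succAbove _ i, hi, zero_smul, zero_add]
      · refine e2.trans (le_trans (le_of_eq ?_) h2)
        rw [Fin.sum_univ_succAbove _ i, hi, abs_zero, zero_add]
    by_cases hq : ∃ i, q i = 0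
    · obtain ⟨i, hi⟩ := hq
      exact drop q i hi rfl le_rfl
    push Not at hq
    obtain ⟨c, hc0, hcs, i₀, hi₀⟩ : ∃ c : Fin (N + 1) → ℝ, ∑ n, c n • φ (y n) = 0 ∧
        ∑ n, |q n| * (c n / q n) ≤ 0 ∧ ∃ i, c i ≠ 0 := by
      obtain ⟨c, hc, hi⟩ := Fintype.not_linearIndependent_iff.1 hli
      rcases le_total (∑ n, |q n| * (c n / q n)) 0 with h | h
      · exact ⟨c, hc, h, hi⟩
      · refine ⟨-c, ?_, ?_, by simpa using hi⟩
        · simpa using hc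
        · simpa [neg_div] using h
    -- Moving along the relation `c` until the smallest ratio `c n / q n`, which is negative,
    -- makes its coefficient vanish changes no sign.
    obtain ⟨i, -, hmin⟩ := Finset.exists_min_image Finset.univ (fun n => c n / q n)
      ⟨i₀, Finset.mem_univ _⟩
    have hneg : c i / q i < 0 := by
      by_contra! hge
      have hnn : ∀ n ∈ Finset.univ, 0 ≤ |q n| * (c n / q n) := fun n hn =>
        mul_nonneg (abs_nonneg _) (hge.trans (hmin n hn))
      have h0 := (Finset.sum_eq_zero_iff_of_nonneg hnn).1
        (le_antisymm hcs (Finset.sum_nonneg hnn)) i₀ (Finset.mem_univ _)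
      simp [hq i₀, hi₀] at h0
    set ρ := c i / q i with hρ
    refine drop (fun n => q n - ρ⁻¹ * c n) i ?_ ?_ ?_
    · have hci : c i ≠ 0 := by
        intro h
        simp [hρ, h] at hneg
      have := hq i
      simp only [hρ]
      field_simp
      ring
    · simp only [sub_smul, mul_smul, Finset.sum_sub_distrib, ← Finset.smul_sum, hc0, smul_zero,
        sub_zero]
    · have habs : ∀ n, |q n - ρ⁻¹ * c n| = |q n| - ρ⁻¹ * (|q n| * (c n / q n)) := by
        intro n
        have h1 : q n - ρ⁻¹ * c n = q n * (1 - ρ⁻¹ * (c n / q n)) := by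
          have := hq n
          field_simp
        have h2 : 0 ≤ 1 - ρ⁻¹ * (c n / q n) := by
          have h3 := mul_le_mul_of_nonpos_left (hmin n (Finset.mem_univ _))
            (inv_nonpos.2 hneg.le)
          rw [inv_mul_cancel₀ hneg.ne] at h3
          linarith
        rw [h1, abs_mul, abs_of_nonneg h2]
        ring
      simp only [habs, Finset.sum_sub_distrib, ← Finset.mul_sum]
      have := mul_nonneg_of_nonpos_of_nonpos (inv_nonpos.2 hneg.le) hcs
      linarith

/-! ### Existence of sparse minimizers -/

/-- The finite-dimensional functional `(y, q) ↦ F (∑ n, q n • φ (y n)) + β ‖q‖₁` with abstract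
data term `F` and feature map `φ`. -/
def parObj {α E : Type*} [AddCommGroup E] [Module ℝ E] (φ : α → E) (F : E → ℝ) (β : ℝ) (N : ℕ)
    (y : Fin N → α) (q : Fin N → ℝ) : ℝ :=
  F (∑ n, q n • φ (y n)) + β * ∑ n, |q n|

lemma exists_fin_of_mem_convexHull {α E : Type*} [AddCommGroup E] [Module ℝ E] {φ : α → E} {a : E}
    (ha : a ∈ convexHull ℝ (Set.range φ)) :
    ∃ (N : ℕ) (y : Fin N → α) (w : Fin N → ℝ), (∀ n, 0 ≤ w n) ∧ ∑ n, w n = 1 ∧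
      ∑ n, w n • φ (y n) = a := by
  obtain ⟨ι, _, w, z, h0, h1, hz, rfl⟩ := mem_convexHull_iff_exists_fintype.1 ha
  choose y hy using hz
  let e := (Fintype.equivFin ι).symm
  refine ⟨Fintype.card ι, y ∘ e, w ∘ e, fun n => h0 _, ?_, ?_⟩
  · rw [← h1]
    exact e.sum_comp w
  · simp only [Function.comp, hy]
    exact e.sum_comp fun i => w i • z i

section Abstract

variable {α E : Type*} [TopologicalSpace α] [NormedAddCommGroup E] [NormedSpace ℝ E]
  {φ : α → E} {F : E → ℝ} {β : ℝ}

/-- For a fixed number of points the positions range over a compact set and the functional is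
coercive in the coefficients, so a minimizer exists. -/
lemma exists_min_fixed [CompactSpace α] [Nonempty α] (hφ : Continuous φ) (hF : Continuous F)
    (hF0 : ∀ v, 0 ≤ F v) (hβ : 0 < β) (D : ℕ) :
    ∃ (y : Fin D → α) (q : Fin D → ℝ), ∀ (y' : Fin D → α) (q' : Fin D → ℝ),
      parObj φ F β D y q ≤ parObj φ F β D y' q' := by
  let G : (Fin D → α) × (Fin D → ℝ) → ℝ := fun p => parObj φ F β D p.1 p.2
  have hG : Continuous G := by
    unfold G parObj
    fun_prop
  have hF0' : 0 ≤ F 0 / β := div_nonneg (hF0 0) hβ.le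
  obtain ⟨a⟩ := ‹Nonempty α›
  have hmem : ((fun _ => a, 0) : (Fin D → α) × (Fin D → ℝ)) ∈
      (Set.univ : Set (Fin D → α)) ×ˢ Metric.closedBall (0 : Fin D → ℝ) (F 0 / β) := by
    simpa using hF0'
  obtain ⟨⟨y, q⟩, -, hmin⟩ := (isCompact_univ.prod
    (isCompact_closedBall (0 : Fin D → ℝ) (F 0 / β))).exists_isMinOn ⟨_, hmem⟩ hG.continuousOn
  refine ⟨y, q, fun y' q' => ?_⟩
  by_cases hq' : ‖q'‖ ≤ F 0 / β
  · exact hmin (a := (y', q')) (by simpa using hq')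
  · refine (hmin hmem).trans ?_
    have h1 : ‖q'‖ ≤ ∑ n, |q' n| := by
      refine (pi_norm_le_iff_of_nonneg (Finset.sum_nonneg fun _ _ => abs_nonneg _)).2 fun i => ?_
      exact Finset.single_le_sum (f := fun n => |q' n|) (fun _ _ => abs_nonneg _)
        (Finset.mem_univ i)
    have h2 : F 0 < β * ∑ n, |q' n| := by
      rw [← div_lt_iff₀' hβ]
      exact (not_le.1 hq').trans_le h1
    have h3 := hF0 (∑ n, q' n • φ (y' n))
    simp only [G, parObj]
    simp
    linarith

/-- Among all finite configurations there is a minimizer with at most `finrank ℝ E` pairwise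
distinct points. -/
lemma exists_sparse_min [FiniteDimensional ℝ E] [CompactSpace α] [Nonempty α]
    (hφ : Continuous φ) (hF : Continuous F) (hF0 : ∀ v, 0 ≤ F v) (hβ : 0 < β) :
    ∃ N ≤ Module.finrank ℝ E, ∃ (y : Fin N → α) (q : Fin N → ℝ), Function.Injective y ∧
      ∀ (N' : ℕ) (y' : Fin N' → α) (q' : Fin N' → ℝ),
        parObj φ F β N y q ≤ parObj φ F β N' y' q' := by
  obtain ⟨y₀, q₀, h₀⟩ := exists_min_fixed hφ hF hF0 hβ (Module.finrank ℝ E)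
  obtain ⟨N, hN, y, q, hinj, e1, e2⟩ := exists_reduced φ _ y₀ q₀
  refine ⟨N, hN, y, q, hinj, fun N' y' q' => ?_⟩
  have hle : parObj φ F β N y q ≤ parObj φ F β _ y₀ q₀ := by
    unfold parObj
    rw [e1]
    gcongr
  refine hle.trans ?_
  obtain ⟨M, hM, y₁, q₁, -, e3, e4⟩ := exists_reduced φ _ y' q'
  have hle' : parObj φ F β M y₁ q₁ ≤ parObj φ F β N' y' q' := by
    unfold parObj
    rw [e3]
    gcongr
  refine le_trans ?_ hle'
  obtain ⟨a⟩ := ‹Nonempty α›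
  -- Pad with zero coefficients up to exactly `finrank ℝ E` points.
  obtain ⟨m, hm⟩ := Nat.exists_eq_add_of_le hM
  generalize Module.finrank ℝ E = D at *
  subst hm
  refine (h₀ (Fin.append y₁ fun _ => a) (Fin.append q₁ fun _ => 0)).trans (le_of_eq ?_)
  simp [parObj, Fin.sum_univ_add]

/-! ### Comparison of measures with atomic combinations -/

variable [MeasurableSpace α]

/-- The integral of `φ` against a finite measure is its total mass times a point in the closed
convex hull of the range of `φ`. -/
lemma exists_integral_eq [FiniteDimensional ℝ E] [CompactSpace α] [Nonempty α]
    [OpensMeasurableSpace α] (hφ : Continuous φ) (ν : Measure α) [IsFiniteMeasure ν] :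
    Integrable φ ν ∧
      ∃ a ∈ closure (convexHull ℝ (Set.range φ)), ∫ x, φ x ∂ν = ν.real Set.univ • a := by
  have hint : Integrable φ ν := by
    rw [← integrableOn_univ]
    exact hφ.continuousOn.integrableOn_compact' isCompact_univ MeasurableSet.univ
  refine ⟨hint, ?_⟩
  rcases eq_or_ne ν 0 with rfl | hν
  · obtain ⟨x⟩ := ‹Nonempty α›
    exact ⟨φ x, subset_closure (subset_convexHull ℝ _ ⟨x, rfl⟩), by simp⟩
  · have : NeZero ν := ⟨hν⟩
    refine ⟨⨍ x, φ x ∂ν, ?_, (measure_smul_average ν φ).symm⟩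
    refine (convex_convexHull ℝ _).closure.average_mem isClosed_closure ?_ hint
    exact Filter.Eventually.of_forall fun x => subset_closure (subset_convexHull ℝ _ ⟨x, rfl⟩)

/-- A lower bound for the finite-dimensional functional is a lower bound for the functional on
differences of two finite measures. Atomic measures attain every pair of points in the convex hull
of the range of `φ`; continuity of `F` extends the bound to its closure, where the averages of `φ`
lie. -/
lemma le_of_forall_parObj [FiniteDimensional ℝ E] [CompactSpace α] [Nonempty α]
    [OpensMeasurableSpace α] (hφ : Continuous φ) (hF : Continuous F) {m : ℝ}
    (hm : ∀ (N : ℕ) (y : Fin N → α) (q : Fin N → ℝ), m ≤ parObj φ F β N y q)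
    (ν₁ ν₂ : Measure α) [IsFiniteMeasure ν₁] [IsFiniteMeasure ν₂] :
    m ≤ F (∫ x, φ x ∂ν₁ - ∫ x, φ x ∂ν₂) + β * (ν₁.real Set.univ + ν₂.real Set.univ) := by
  obtain ⟨-, a, ha, ea⟩ := exists_integral_eq hφ ν₁
  obtain ⟨-, b, hb, eb⟩ := exists_integral_eq hφ ν₂
  rw [ea, eb]
  have hs : 0 ≤ ν₁.real Set.univ := measureReal_nonneg
  have ht : 0 ≤ ν₂.real Set.univ := measureReal_nonneg
  generalize ν₁.real Set.univ = s at *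
  generalize ν₂.real Set.univ = t at *
  let C := {p : E × E | m ≤ F (s • p.1 - t • p.2) + β * (s + t)}
  have hC : IsClosed C := isClosed_le continuous_const (by fun_prop)
  have hsub : convexHull ℝ (Set.range φ) ×ˢ convexHull ℝ (Set.range φ) ⊆ C := by
    rintro ⟨u, v⟩ ⟨hu, hv⟩
    obtain ⟨N, y, w, h0, h1, rfl⟩ := exists_fin_of_mem_convexHull hu
    obtain ⟨N', y', w', h0', h1', rfl⟩ := exists_fin_of_mem_convexHull hv
    have hpar := hm (N + N') (Fin.append y y')
      (Fin.append (fun n => s * w n) (fun n => -(t * w' n)))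
    have e1 : ∑ n, |s * w n| = s := by
      simp only [abs_mul, abs_of_nonneg hs, abs_of_nonneg (h0 _), ← Finset.mul_sum, h1, mul_one]
    have e2 : ∑ n, |t * w' n| = t := by
      simp only [abs_mul, abs_of_nonneg ht, abs_of_nonneg (h0' _), ← Finset.mul_sum, h1', mul_one]
    simp only [parObj, Fin.sum_univ_add, Fin.append_left, Fin.append_right, abs_neg, e1, e2,
      neg_smul, Finset.sum_neg_distrib, mul_smul, ← Finset.smul_sum, ← sub_eq_add_neg] at hpar
    exact hpar
  have hmem : (a, b) ∈ C := by
    refine hC.closure_subset_iff.2 hsub ?_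
    rw [closure_prod_eq]
    exact ⟨ha, hb⟩
  exact hmem

end Abstract

/-! ### Jordan decomposition of a sparse measure -/

lemma mnorm_eq {α : Type*} [MeasurableSpace α] (μ : SignedMeasure α) :
    mnorm μ = μ.toJordanDecomposition.posPart.real Set.univ +
      μ.toJordanDecomposition.negPart.real Set.univ := by
  rw [mnorm, SignedMeasure.totalVariation, Measure.add_apply,
    ENNReal.toReal_add (measure_ne_top _ _) (measure_ne_top _ _)]
  rfl

section Sparse

variable {α : Type*} [MeasurableSpace α] [MeasurableSingletonClass α] {N : ℕ}

/-- The positive measure `∑ n, p n • δ_{y n}` with nonnegative weights. -/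
def atoms (p : Fin N → NNReal) (y : Fin N → α) : Measure α :=
  Measure.sum fun n => p n • Measure.dirac (y n)

lemma atoms_apply (p : Fin N → NNReal) (y : Fin N → α) (s : Set α) (hs : MeasurableSet s) :
    atoms p y s = ∑ n, (p n : ENNReal) * s.indicator 1 (y n) := by
  rw [atoms, Measure.sum_apply _ hs, tsum_fintype]
  refine Finset.sum_congr rfl fun n _ => ?_
  rw [Measure.smul_apply, Measure.dirac_apply' _ hs, ENNReal.smul_def, smul_eq_mul]

instance (p : Fin N → NNReal) (y : Fin N → α) : IsFiniteMeasure (atoms p y) :=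
  ⟨by
    rw [atoms_apply _ _ _ MeasurableSet.univ]
    simp [ENNReal.sum_lt_top]⟩

lemma atoms_real (p : Fin N → NNReal) (y : Fin N → α) (s : Set α) (hs : MeasurableSet s) :
    (atoms p y).real s = ∑ n, (p n : ℝ) * s.indicator 1 (y n) := by
  rw [measureReal_def, atoms_apply _ _ _ hs, ENNReal.toReal_sum]
  · refine Finset.sum_congr rfl fun n _ => ?_
    by_cases h : y n ∈ s <;> simp [h]
  · intro n _
    by_cases h : y n ∈ s <;> simp [h]

lemma integral_atoms (p : Fin N → NNReal) (y : Fin N → α) (f : α → ℝ) :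
    ∫ x, f x ∂(atoms p y) = ∑ n, (p n : ℝ) * f (y n) := by
  have h : ∀ n ∈ Finset.univ, Integrable f (p n • Measure.dirac (y n)) := fun n _ =>
    (integrable_dirac (by simp)).smul_measure_nnreal
  rw [atoms, Measure.sum_fintype, integral_finsetSum_measure h]
  refine Finset.sum_congr rfl fun n _ => ?_
  rw [integral_smul_nnreal_measure, integral_dirac, NNReal.smul_def, smul_eq_mul]

/-- For pairwise distinct points the Jordan decomposition of `∑ n, q n • δ_{y n}` splits the
coefficients by sign. Distinctness rules out cancellation between atoms. -/
lemma jordan_sparseSub (q : Fin N → ℝ) (y : Fin N → α) (hy : Function.Injective y) :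
    (sparseSub q y).toJordanDecomposition.posPart = atoms (fun n => (q n).toNNReal) y ∧
    (sparseSub q y).toJordanDecomposition.negPart = atoms (fun n => (-q n).toNNReal) y := by
  have hT : MeasurableSet (y '' {n | q n ≤ 0}) := (Set.toFinite _).measurableSet
  let j : JordanDecomposition α :=
    { posPart := atoms (fun n => (q n).toNNReal) y
      negPart := atoms (fun n => (-q n).toNNReal) y
      mutuallySingular := by
        refine ⟨y '' {n | q n ≤ 0}, hT, ?_, ?_⟩
        · rw [atoms_apply _ _ _ hT]
          refine Finset.sum_eq_zero fun n _ => ?_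
          by_cases h : q n ≤ 0
          · simp [Real.toNNReal_of_nonpos h]
          · have : y n ∉ y '' {n | q n ≤ 0} := by
              rw [hy.mem_set_image]
              exact h
            simp [this]
        · rw [atoms_apply _ _ _ hT.compl]
          refine Finset.sum_eq_zero fun n _ => ?_
          by_cases h : q n ≤ 0
          · have : y n ∈ y '' {n | q n ≤ 0} := ⟨n, h, rfl⟩
            simp [this]
          · have : -q n ≤ 0 := by linarith
            simp [Real.toNNReal_of_nonpos this] }
  have hj : sparseSub q y = j.toSignedMeasure := by
    ext s hs
    rw [JordanDecomposition.toSignedMeasure, Measure.toSignedMeasure_sub_apply hs,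
      atoms_real _ _ _ hs, atoms_real _ _ _ hs, sparseSub, ← Finset.sum_sub_distrib]
    have : ∀ (t : Finset (Fin N)),
        (∑ n ∈ t, q n • (Measure.dirac (y n)).toSignedMeasure) s =
          ∑ n ∈ t, q n * s.indicator 1 (y n) := by
      intro t
      induction t using Finset.induction_on with
      | empty => simp
      | insert a t ha ih =>
        rw [Finset.sum_insert ha, Finset.sum_insert ha, add_apply, ih,
          smul_apply, Measure.toSignedMeasure_apply_measurable hs,
          measureReal_def, Measure.dirac_apply' _ hs]
        by_cases h : y a ∈ s <;> simp [h]
    rw [this]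
    refine Finset.sum_congr rfl fun n _ => ?_
    rw [← sub_mul, Real.coe_toNNReal', Real.coe_toNNReal']
    congr 1
    rcases le_total (q n) 0 with h | h
    · rw [max_eq_right h, max_eq_left (by linarith)]
      ring
    · rw [max_eq_left h, max_eq_right (by linarith)]
      ring
  rw [SignedMeasure.toJordanDecomposition_eq hj]
  exact ⟨rfl, rfl⟩

lemma sInt_sparseSub (q : Fin N → ℝ) (y : Fin N → α) (hy : Function.Injective y) (f : α → ℝ) :
    sInt (sparseSub q y) f = ∑ n, q n * f (y n) := by
  obtain ⟨h1, h2⟩ := jordan_sparseSub q y hy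
  rw [sInt, h1, h2, integral_atoms, integral_atoms, ← Finset.sum_sub_distrib]
  refine Finset.sum_congr rfl fun n _ => ?_
  rw [← sub_mul, Real.coe_toNNReal', Real.coe_toNNReal', max_zero_sub_eq_self]

lemma mnorm_sparseSub (q : Fin N → ℝ) (y : Fin N → α) (hy : Function.Injective y) :
    mnorm (sparseSub q y) = ∑ n, |q n| := by
  obtain ⟨h1, h2⟩ := jordan_sparseSub q y hy
  rw [mnorm_eq, h1, h2, atoms_real _ _ _ MeasurableSet.univ, atoms_real _ _ _ MeasurableSet.univ,
    ← Finset.sum_add_distrib]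
  refine Finset.sum_congr rfl fun n _ => ?_
  rw [← add_mul, Real.coe_toNNReal', Real.coe_toNNReal', max_zero_add_max_neg_zero_eq_abs_self]
  simp

end Sparse

/-- **Exactness of the convex relaxation.** The minimum of the Tikhonov functional over
`M(Ω_s)` equals the infimum of the parametrized problem; a triple `(N̄, ȳ, q̄)` with pairwise
distinct points minimizes the parametrized problem iff the sparse measure it parametrizes
minimizes the Tikhonov functional; and a sparse minimizer with at most `N_o` points exists. -/
theorem stmt_1 (d dO No Ns : ℕ) (hd : 1 ≤ d)
    (Ωs : Set (EuclideanSpace ℝ (Fin d))) (hΩc : IsCompact Ωs)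
    (hΩi : (interior Ωs).Nonempty)
    (Ωo : Set (EuclideanSpace ℝ (Fin dO))) (hΩo : IsCompact Ωo)
    (k : EuclideanSpace ℝ (Fin dO) → EuclideanSpace ℝ (Fin d) → ℝ)
    (hk : ContinuousOn (fun p : EuclideanSpace ℝ (Fin dO) × EuclideanSpace ℝ (Fin d) =>
        k p.1 p.2) (Ωo ×ˢ Ωs))
    (x : Fin No → EuclideanSpace ℝ (Fin dO)) (hx : ∀ j, x j ∈ Ωo)
    (σ0 : Fin No → ℝ) (hσ0 : ∀ j, 0 < σ0 j)
    (qd : Fin Ns → ℝ) (hqd : ∀ n, qd n ≠ 0)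
    (yd : Fin Ns → EuclideanSpace ℝ (Fin d)) (hyd : ∀ n, yd n ∈ interior Ωs)
    (hydinj : Function.Injective yd)
    (β : ℝ) (hβ : 0 < β) (ε : Fin No → ℝ)
    (μd : SignedMeasure Ωs)
    (hμd : μd = sparseSub qd fun n => (⟨yd n, interior_subset (hyd n)⟩ : Ωs))
    (zd : Fin No → ℝ) (hzd : zd = fun j => Kop Ωs k x μd j + ε j) :
    sInf {r : ℝ | ∃ μ : SignedMeasure Ωs, r = Jfun Ωs k x σ0 zd β μ} =
      sInf {r : ℝ | ∃ (N : ℕ) (y : Fin N → Ωs) (q : Fin N → ℝ),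
        r = Jpar Ωs k x σ0 zd β N y q} ∧
    (∀ (Nb : ℕ) (yb : Fin Nb → Ωs) (qb : Fin Nb → ℝ), Function.Injective yb →
      ((∀ (N' : ℕ) (y' : Fin N' → Ωs) (q' : Fin N' → ℝ),
          Jpar Ωs k x σ0 zd β Nb yb qb ≤ Jpar Ωs k x σ0 zd β N' y' q') ↔
        (∀ μ : SignedMeasure Ωs,
          Jfun Ωs k x σ0 zd β (sparseSub qb yb) ≤ Jfun Ωs k x σ0 zd β μ))) ∧
    (∃ (Nb : ℕ), Nb ≤ No ∧ ∃ (yb : Fin Nb → Ωs) (qb : Fin Nb → ℝ),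
      Function.Injective yb ∧
      ∀ μ : SignedMeasure Ωs,
        Jfun Ωs k x σ0 zd β (sparseSub qb yb) ≤ Jfun Ωs k x σ0 zd β μ) := by
  have : CompactSpace Ωs := isCompact_iff_compactSpace.1 hΩc
  have : Nonempty Ωs := (hΩi.mono interior_subset).to_subtype
  let φ : Ωs → Fin No → ℝ := fun y j => k (x j) y
  have hφ : Continuous φ := by
    refine continuous_pi fun j => ?_
    exact hk.comp_continuous (f := fun y : Ωs => (x j, (y : EuclideanSpace ℝ (Fin d))))
      (by fun_prop) fun y => ⟨hx j, y.2⟩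
  let F : (Fin No → ℝ) → ℝ := fun v => (1 / 2) * ∑ j, (v j - zd j) ^ 2 / σ0 j
  have hF : Continuous F := by
    unfold F
    fun_prop
  have hF0 : ∀ v, 0 ≤ F v := fun v => mul_nonneg (by norm_num)
    (Finset.sum_nonneg fun j _ => div_nonneg (sq_nonneg _) (hσ0 j).le)
  have hJpar : ∀ (N : ℕ) (y : Fin N → Ωs) (q : Fin N → ℝ),
      Jpar Ωs k x σ0 zd β N y q = parObj φ F β N y q := by
    intro N y q
    simp [Jpar, parObj, F, φ, Finset.sum_apply]
  have hJsparse : ∀ (N : ℕ) (y : Fin N → Ωs) (q : Fin N → ℝ), Function.Injective y →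
      Jfun Ωs k x σ0 zd β (sparseSub q y) = Jpar Ωs k x σ0 zd β N y q := by
    intro N y q hy
    simp only [Jfun, Jpar, Kop, sInt_sparseSub q y hy, mnorm_sparseSub q y hy]
  have hlow : ∀ m : ℝ, (∀ (N : ℕ) (y : Fin N → Ωs) (q : Fin N → ℝ),
      m ≤ Jpar Ωs k x σ0 zd β N y q) → ∀ μ, m ≤ Jfun Ωs k x σ0 zd β μ := by
    intro m hm μ
    have h := le_of_forall_parObj hφ hF (fun N y q => (hm N y q).trans_eq (hJpar N y q))
      μ.toJordanDecomposition.posPart μ.toJordanDecomposition.negPart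
    rw [← mnorm_eq] at h
    refine h.trans_eq ?_
    have hco : ∀ (ν : Measure Ωs) [IsFiniteMeasure ν] (j : Fin No),
        (∫ y, φ y ∂ν) j = ∫ y, φ y j ∂ν := fun ν _ j =>
      ((ContinuousLinearMap.proj (R := ℝ) (φ := fun _ : Fin No => ℝ) j).integral_comp_comm
        (exists_integral_eq hφ ν).1).symm
    simp only [Jfun, F, Kop, sInt, Pi.sub_apply, hco, φ]
  obtain ⟨N, hN, y, q, hinj, hmin⟩ := exists_sparse_min hφ hF hF0 hβ
  simp only [← hJpar] at hmin
  have hminJ := hlow _ hmin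
  refine ⟨?_, ?_, N, by simpa using hN, y, q, hinj, fun μ => (hJsparse N y q hinj).trans_le
    (hminJ μ)⟩
  · have l1 : IsLeast {r : ℝ | ∃ μ : SignedMeasure Ωs, r = Jfun Ωs k x σ0 zd β μ}
        (Jpar Ωs k x σ0 zd β N y q) := by
      refine ⟨⟨_, (hJsparse N y q hinj).symm⟩, ?_⟩
      rintro _ ⟨μ, rfl⟩
      exact hminJ μ
    have l2 : IsLeast {r : ℝ | ∃ (N : ℕ) (y : Fin N → Ωs) (q : Fin N → ℝ),
        r = Jpar Ωs k x σ0 zd β N y q} (Jpar Ωs k x σ0 zd β N y q) := by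
      refine ⟨⟨N, y, q, rfl⟩, ?_⟩
      rintro _ ⟨N', y', q', rfl⟩
      exact hmin N' y' q'
    rw [l1.csInf_eq, l2.csInf_eq]
  · intro Nb yb qb hyb
    rw [hJsparse Nb yb qb hyb]
    refine ⟨fun h => hlow _ h, fun h N' y' q' => ?_⟩
    exact (h (sparseSub q y)).trans ((hJsparse N y q hinj).trans_le (hmin N' y' q'))
end
end

section
/- Assume there exists ζ ∈ ℝ^{N_o} such that the function η := K* Σ₀^{-1} ζ satisfies: |η(y)| ≤ 1 for all y ∈ Ω_s, η(y_n†) = sign(q_n†) for all n = 1, …, N_s, and |η(y)| < 1 for all y ∈ Ω_s outside the set {y_1†, …, y_{N_s}†}. Assume moreover that the matrix (k(x_j, y_n†))_{j=1,…,N_o; n=1,…,N_s} ∈ ℝ^{N_o × N_s} has trivial kernel. Then µ† is the unique solution of the minimum norm problem (P₀). -/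
/-!
The dual certificate `η` pairs with a signed measure `μ` through `K μ` only, since
`∫ η dμ = ∑ j, (σ0 j)⁻¹ ζ j (K μ) j`. Hence every feasible `μ` satisfies
`‖μ‖ ≥ ∫ η dμ = ∫ η dμ†`, because `|η| ≤ 1`, and `∫ η dμ† = ∑ n, |q_n| = ‖μ†‖`, because `η` is the
sign of `q_n` at `y_n`.

If equality holds for `μ`, then `∫ (1 - η) dμ⁺ + ∫ (1 + η) dμ⁻ = 0` with both integrands nonnegative
(`posPart_negPart_null_of_mnorm_le`). As `|η| < 1` off the support of `μ†`, both Jordan parts of `μ`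
live on `{y_1, …, y_N}`, so integration against `μ` is a finite sum with weights `μ {y_n}`
(`sInt_eq_sum`). The equation `K μ = K μ†` then says that the differences `μ {y_n} - q_n` lie in the
kernel of the measurement matrix, so they vanish and `μ = μ†`.
-/

open MeasureTheory

noncomputable section

section General

variable {α : Type*} [MeasurableSpace α]

theorem apply_eq_sInt_indicator (μ : SignedMeasure α) {A : Set α} (hA : MeasurableSet A) :
    μ A = sInt μ (A.indicator 1) := by
  rw [μ.apply_eq_posPart_real_sub_negPart_real hA, sInt, integral_indicator_one hA,
    integral_indicator_one hA]

theorem mnorm_eq_s4 (μ : SignedMeasure α) :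
    mnorm μ = (∫ _, (1 : ℝ) ∂μ.toJordanDecomposition.posPart) +
      ∫ _, (1 : ℝ) ∂μ.toJordanDecomposition.negPart := by
  rw [mnorm, SignedMeasure.totalVariation, Measure.add_apply,
    ENNReal.toReal_add (by finiteness) (by finiteness)]
  simp [measureReal_def]

theorem sparseSub_apply {N : ℕ} (q : Fin N → ℝ) (y : Fin N → α) {A : Set α} (hA : MeasurableSet A) :
    sparseSub q y A = ∑ n, q n * A.indicator 1 (y n) := by
  simp only [sparseSub, FunLike.coe_sum, Finset.sum_apply, FunLike.coe_smul, Pi.smul_apply,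
    smul_eq_mul, Measure.toSignedMeasure_apply_measurable hA]
  refine Finset.sum_congr rfl fun n _ => ?_
  by_cases h : y n ∈ A <;> simp [measureReal_def, h, Measure.dirac_apply' _ hA]

end General

section Concentrated

variable {α : Type*} [MeasurableSpace α] [MeasurableSingletonClass α] {N : ℕ}

theorem integral_eq_sum_of_null_compl_range (p : Measure α) [IsFiniteMeasure p] {y : Fin N → α}
    (hy : Function.Injective y) (hp : p (Set.range y)ᶜ = 0) (f : α → ℝ) :
    ∫ a, f a ∂p = ∑ n, p.real {y n} * f (y n) := by
  have h1 : p.restrict (⋃ n, {y n}) = p := by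
    apply Measure.restrict_eq_self_of_ae_mem
    rw [Set.iUnion_singleton_eq_range]
    exact mem_ae_iff.2 hp
  rw [← h1, integral_iUnion_fintype (fun n => measurableSet_singleton _)
    (fun m n hmn => by simpa [Function.onFun] using fun h => hmn (hy h.symm).symm)
    (fun n => integrableOn_singleton (by finiteness)), h1]
  simp [measureReal_def]

/-- `μ` is carried by the finite set `{y_1, …, y_N}`, in the sense that both parts of its Jordan
decomposition vanish on the complement. -/
def CarriedBy (μ : SignedMeasure α) (y : Fin N → α) : Prop :=
  μ.toJordanDecomposition.posPart (Set.range y)ᶜ = 0 ∧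
    μ.toJordanDecomposition.negPart (Set.range y)ᶜ = 0

theorem sInt_eq_sum {μ : SignedMeasure α} {y : Fin N → α} (hy : Function.Injective y)
    (h : CarriedBy μ y) (f : α → ℝ) : sInt μ f = ∑ n, μ {y n} * f (y n) := by
  rw [sInt, integral_eq_sum_of_null_compl_range _ hy h.1,
    integral_eq_sum_of_null_compl_range _ hy h.2, ← Finset.sum_sub_distrib]
  refine Finset.sum_congr rfl fun n _ => ?_
  rw [μ.apply_eq_posPart_real_sub_negPart_real (measurableSet_singleton _)]
  ring

/-- By mutual singularity only one of the two Jordan parts charges a given point. -/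
theorem posPart_add_negPart_singleton (μ : SignedMeasure α) (a : α) :
    μ.toJordanDecomposition.posPart.real {a} + μ.toJordanDecomposition.negPart.real {a}
      = |μ {a}| := by
  obtain ⟨u, -, hp, hn⟩ := μ.toJordanDecomposition.mutuallySingular
  rw [μ.apply_eq_posPart_real_sub_negPart_real (measurableSet_singleton _)]
  by_cases ha : a ∈ u
  · have : μ.toJordanDecomposition.posPart.real {a} = 0 := by
      simp [measureReal_def, measure_mono_null (Set.singleton_subset_iff.2 ha) hp]
    rw [this, zero_add, zero_sub, abs_neg, abs_of_nonneg measureReal_nonneg]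
  · have : μ.toJordanDecomposition.negPart.real {a} = 0 := by
      simp [measureReal_def,
        measure_mono_null (Set.singleton_subset_iff.2 (Set.mem_compl ha)) hn]
    rw [this, add_zero, sub_zero, abs_of_nonneg measureReal_nonneg]

theorem mnorm_eq_sum {μ : SignedMeasure α} {y : Fin N → α} (hy : Function.Injective y)
    (h : CarriedBy μ y) : mnorm μ = ∑ n, |μ {y n}| := by
  rw [mnorm_eq_s4, integral_eq_sum_of_null_compl_range _ hy h.1,
    integral_eq_sum_of_null_compl_range _ hy h.2, ← Finset.sum_add_distrib]
  refine Finset.sum_congr rfl fun n _ => ?_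
  rw [mul_one, mul_one, posPart_add_negPart_singleton]

theorem sparseSub_singleton (q : Fin N → ℝ) {y : Fin N → α} (hy : Function.Injective y)
    (m : Fin N) : sparseSub q y {y m} = q m := by
  rw [sparseSub_apply q y (measurableSet_singleton _), Finset.sum_eq_single m]
  · simp
  · intro n _ hn
    simp [hy.ne hn]
  · simp

theorem carriedBy_sparseSub (q : Fin N → ℝ) (y : Fin N → α) : CarriedBy (sparseSub q y) y := by
  set μ := sparseSub q y with hμ
  have hS : MeasurableSet (Set.range y)ᶜ := (Set.finite_range y).measurableSet.compl
  have h0 : ∀ A ⊆ (Set.range y)ᶜ, MeasurableSet A →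
      μ.toJordanDecomposition.posPart.real A = μ.toJordanDecomposition.negPart.real A := by
    intro A hA hAm
    have h := μ.apply_eq_posPart_real_sub_negPart_real hAm
    rw [hμ, sparseSub_apply q y hAm, Finset.sum_eq_zero] at h
    · linarith
    · intro n _
      have : y n ∉ A := fun hn => hA hn ⟨n, rfl⟩
      simp [this]
  obtain ⟨u, hu, hp, hn⟩ := μ.toJordanDecomposition.mutuallySingular
  -- Off `range y` the two parts agree, so each inherits the null set of the other.
  have hn' : μ.toJordanDecomposition.negPart ((Set.range y)ᶜ ∩ u) = 0 := by
    have h := h0 _ Set.inter_subset_left (hS.inter hu)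
    rw [measureReal_def, measure_mono_null Set.inter_subset_right hp, ENNReal.toReal_zero] at h
    exact (measureReal_eq_zero_iff).1 h.symm
  have hp' : μ.toJordanDecomposition.posPart ((Set.range y)ᶜ ∩ uᶜ) = 0 := by
    have h := h0 _ Set.inter_subset_left (hS.inter hu.compl)
    rw [measureReal_def (μ := μ.toJordanDecomposition.negPart),
      measure_mono_null Set.inter_subset_right hn, ENNReal.toReal_zero] at h
    exact (measureReal_eq_zero_iff).1 h
  constructor
  · rw [← Set.inter_union_compl (Set.range y)ᶜ u]
    exact measure_union_null (measure_mono_null Set.inter_subset_right hp) hp'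
  · rw [← Set.inter_union_compl (Set.range y)ᶜ u]
    exact measure_union_null hn' (measure_mono_null Set.inter_subset_right hn)

end Concentrated

section Duality

variable {α : Type*} [MeasurableSpace α]

theorem sInt_sum {J : ℕ} (μ : SignedMeasure α) (c : Fin J → ℝ) (f : Fin J → α → ℝ)
    (hp : ∀ j, Integrable (f j) μ.toJordanDecomposition.posPart)
    (hn : ∀ j, Integrable (f j) μ.toJordanDecomposition.negPart) :
    sInt μ (fun a => ∑ j, c j * f j a) = ∑ j, c j * sInt μ (f j) := by
  simp only [sInt]
  rw [integral_finsetSum _ fun j _ => (hp j).const_mul (c j),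
    integral_finsetSum _ fun j _ => (hn j).const_mul (c j), ← Finset.sum_sub_distrib]
  refine Finset.sum_congr rfl fun j _ => ?_
  rw [integral_const_mul, integral_const_mul]
  ring

theorem sInt_le_mnorm (μ : SignedMeasure α) {f : α → ℝ}
    (hf : ∀ a, |f a| ≤ 1)
    (hp : Integrable f μ.toJordanDecomposition.posPart)
    (hn : Integrable f μ.toJordanDecomposition.negPart) : sInt μ f ≤ mnorm μ := by
  rw [mnorm_eq_s4, sInt, sub_eq_add_neg, ← integral_neg]
  exact add_le_add
    (integral_mono hp (integrable_const _) fun a => (abs_le.1 (hf a)).2)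
    (integral_mono hn.neg (integrable_const _) fun a => by
      have := (abs_le.1 (hf a)).1
      simp only
      linarith)

/-- The equality case of `sInt_le_mnorm`: the positive part sees only `f = 1`, the negative part
only `f = -1`, so neither charges the set where `|f| < 1`. -/
theorem posPart_negPart_null_of_mnorm_le (μ : SignedMeasure α)
    {f : α → ℝ} (hf : ∀ a, |f a| ≤ 1)
    (hp : Integrable f μ.toJordanDecomposition.posPart)
    (hn : Integrable f μ.toJordanDecomposition.negPart) (h : mnorm μ ≤ sInt μ f) {S : Set α}
    (hS : ∀ a ∈ S, |f a| < 1) :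
    μ.toJordanDecomposition.posPart S = 0 ∧ μ.toJordanDecomposition.negPart S = 0 := by
  have hp0 : 0 ≤ fun a => 1 - f a := fun a => sub_nonneg.2 (abs_le.1 (hf a)).2
  have hn0 : 0 ≤ fun a => 1 + f a := fun a => by
    have := (abs_le.1 (hf a)).1
    simp only [Pi.zero_apply]
    linarith
  have hip : Integrable (fun a => 1 - f a) μ.toJordanDecomposition.posPart :=
    (integrable_const _).sub hp
  have hin : Integrable (fun a => 1 + f a) μ.toJordanDecomposition.negPart :=
    (integrable_const _).add hn
  have e1 := integral_sub (integrable_const (1 : ℝ)) hp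
  have e2 := integral_add (integrable_const (1 : ℝ)) hn
  have g1 := integral_nonneg (μ := μ.toJordanDecomposition.posPart) hp0
  have g2 := integral_nonneg (μ := μ.toJordanDecomposition.negPart) hn0
  rw [mnorm_eq_s4, sInt] at h
  have z1 := (integral_eq_zero_iff_of_nonneg hp0 hip).1 (by linarith)
  have z2 := (integral_eq_zero_iff_of_nonneg hn0 hin).1 (by linarith)
  constructor
  · refine measure_mono_null (fun a ha => ?_) (ae_iff.1 z1)
    have := (abs_lt.1 (hS a ha)).2
    simp only [Set.mem_ofPred_eq, Pi.zero_apply]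
    linarith
  · refine measure_mono_null (fun a ha => ?_) (ae_iff.1 z2)
    have := (abs_lt.1 (hS a ha)).1
    simp only [Set.mem_ofPred_eq, Pi.zero_apply]
    linarith

end Duality

/-- **Identifiability under the strengthened source condition.** If there is a dual certificate
`η = K* Σ₀⁻¹ ζ` with `|η| ≤ 1` on `Ω_s`, `η(y_n†) = sign(q_n†)`, `|η| < 1` away from the
support, and the restricted measurement matrix `(k(x_j, y_n†))` has trivial kernel, then `µ†`
is the unique solution of the minimum norm problem `(P₀)`. -/
theorem stmt_4 (d dO No Ns : ℕ) (hd : 1 ≤ d)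
    (Ωs : Set (EuclideanSpace ℝ (Fin d))) (hΩc : IsCompact Ωs)
    (hΩi : (interior Ωs).Nonempty)
    (Ωo : Set (EuclideanSpace ℝ (Fin dO))) (hΩo : IsCompact Ωo)
    (k : EuclideanSpace ℝ (Fin dO) → EuclideanSpace ℝ (Fin d) → ℝ)
    (hk : ContinuousOn (fun p : EuclideanSpace ℝ (Fin dO) × EuclideanSpace ℝ (Fin d) =>
        k p.1 p.2) (Ωo ×ˢ Ωs))
    (x : Fin No → EuclideanSpace ℝ (Fin dO)) (hx : ∀ j, x j ∈ Ωo)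
    (σ0 : Fin No → ℝ) (hσ0 : ∀ j, 0 < σ0 j)
    (qd : Fin Ns → ℝ) (hqd : ∀ n, qd n ≠ 0)
    (yd : Fin Ns → EuclideanSpace ℝ (Fin d)) (hyd : ∀ n, yd n ∈ interior Ωs)
    (hydinj : Function.Injective yd)
    (μd : SignedMeasure Ωs)
    (hμd : μd = sparseSub qd fun n => (⟨yd n, interior_subset (hyd n)⟩ : Ωs))
    (ζ : Fin No → ℝ) (η : EuclideanSpace ℝ (Fin d) → ℝ)
    (hη : η = fun yy => ∑ j, (σ0 j)⁻¹ * ζ j * k (x j) yy)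
    (hη1 : ∀ yy ∈ Ωs, |η yy| ≤ 1)
    (hη2 : ∀ n, η (yd n) = Real.sign (qd n))
    (hη3 : ∀ yy ∈ Ωs, yy ∉ Set.range yd → |η yy| < 1)
    (hker : ∀ c : Fin Ns → ℝ, (Matrix.of fun j n => k (x j) (yd n)).mulVec c = 0 → c = 0) :
    (∀ μ : SignedMeasure Ωs, Kop Ωs k x μ = Kop Ωs k x μd → mnorm μd ≤ mnorm μ) ∧
    (∀ μ : SignedMeasure Ωs, Kop Ωs k x μ = Kop Ωs k x μd → μ ≠ μd → mnorm μd < mnorm μ) := by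
  have : CompactSpace Ωs := isCompact_iff_compactSpace.1 hΩc
  set y : Fin Ns → Ωs := fun n => ⟨yd n, interior_subset (hyd n)⟩ with hy
  have hyinj : Function.Injective y := fun m n h => hydinj (congrArg Subtype.val h)
  have hkc : ∀ j, Continuous fun a : Ωs => k (x j) a := fun j =>
    hk.comp_continuous (f := fun a : Ωs => (x j, (a : EuclideanSpace ℝ (Fin d))))
      (by fun_prop) fun a => ⟨hx j, a.2⟩
  have hint : ∀ {f : Ωs → ℝ}, Continuous f → ∀ (p : Measure Ωs) [IsFiniteMeasure p],
      Integrable f p := fun hf p _ =>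
    hf.integrable_of_hasCompactSupport (HasCompactSupport.of_compactSpace _)
  set e : Ωs → ℝ := fun a => ∑ j, (σ0 j)⁻¹ * ζ j * k (x j) a with he
  have heη : ∀ a : Ωs, η a = e a := fun a => by rw [hη]
  have hec : Continuous e := continuous_finsetSum _ fun j _ => (hkc j).const_mul _
  have he1 : ∀ a, |e a| ≤ 1 := fun a => heη a ▸ hη1 a a.2
  have he3 : ∀ a ∈ (Set.range y)ᶜ, |e a| < 1 := fun a ha => by
    rw [← heη a]
    refine hη3 a a.2 ?_
    rintro ⟨n, hn⟩
    exact ha ⟨n, Subtype.ext hn⟩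
  have hpair : ∀ μ : SignedMeasure Ωs, sInt μ e = ∑ j, (σ0 j)⁻¹ * ζ j * Kop Ωs k x μ j :=
    fun μ => sInt_sum μ (fun j => (σ0 j)⁻¹ * ζ j) (fun j a => k (x j) a)
      (fun j => hint (hkc j) _) (fun j => hint (hkc j) _)
  have hcd : CarriedBy μd y := hμd ▸ carriedBy_sparseSub qd y
  have hmd : ∀ n, μd {y n} = qd n := fun n => hμd ▸ sparseSub_singleton qd hyinj n
  have hnorm : mnorm μd = sInt μd e := by
    rw [mnorm_eq_sum hyinj hcd, sInt_eq_sum hyinj hcd]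
    refine Finset.sum_congr rfl fun n _ => ?_
    rw [hmd, ← heη, hη2 n]
    rcases (hqd n).lt_or_gt with h | h
    · rw [abs_of_neg h, Real.sign_of_neg h]; ring
    · rw [abs_of_pos h, Real.sign_of_pos h]; ring
  have hle : ∀ μ : SignedMeasure Ωs, Kop Ωs k x μ = Kop Ωs k x μd → mnorm μd ≤ mnorm μ := by
    intro μ hμ
    rw [hnorm, hpair, ← hμ, ← hpair]
    exact sInt_le_mnorm μ he1 (hint hec _) (hint hec _)
  refine ⟨hle, fun μ hμ hne => lt_of_le_of_ne (hle μ hμ) fun heq => hne ?_⟩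
  have hc : CarriedBy μ y := by
    refine posPart_negPart_null_of_mnorm_le μ he1 (hint hec _) (hint hec _) ?_ he3
    rw [← heq, hnorm, hpair, hpair, hμ]
  have hzero := hker (fun n => μ {y n} - qd n) <| by
    funext j
    have h := congrFun hμ j
    simp only [Kop] at h
    rw [sInt_eq_sum hyinj hc, sInt_eq_sum hyinj hcd, ← sub_eq_zero, ← Finset.sum_sub_distrib] at h
    simp only [Matrix.mulVec, dotProduct, Matrix.of_apply, Pi.zero_apply]
    rw [← h]
    refine Finset.sum_congr rfl fun n _ => ?_
    rw [hmd]
    ring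
  ext A hA
  rw [apply_eq_sInt_indicator μ hA, apply_eq_sInt_indicator μd hA, sInt_eq_sum hyinj hc,
    sInt_eq_sum hyinj hcd]
  refine Finset.sum_congr rfl fun n _ => ?_
  rw [hmd, sub_eq_zero.1 (congrFun hzero n)]
end
end

section
/- Suppose k(x, ·) is three times continuously differentiable in y with finite bounds C_k, C'_k, C''_k, C'''_k, and that G'(m†) has full column rank. Then there exist constants C₁ > 0 and r̂ > 0 such that for all ε ∈ ℝ^{N_o} and β > 0 with C₁(‖ε‖_{Σ₀^{-1}} + β) ≤ 1: the stationarity equation S(m) := G'(m)ᵀ Σ₀^{-1}(G(m) − G(m†) − ε) + β(ρ; 0) = 0 has a unique solution m̂ in the closed ball {m : ‖m − m†‖_{W†} ≤ (3/2) r̂}; this solution satisfies ‖m̂ − m†‖_{W†} ≤ r̂, ‖m̂ − m†‖_{W†} ≤ 2‖δm̂‖_{W†} ≤ C₁(‖ε‖_{Σ₀^{-1}} + β), and ‖m̂ − m† − δm̂‖_{W†} ≤ C₁²(‖ε‖_{Σ₀^{-1}} + β)², where δm̂ = I₀^{-1}(G'(m†)ᵀ Σ₀^{-1} ε − β(ρ;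 0)). -/
/-!
The proof is a contraction argument for the simplified Newton map `T(m) = m - I₀⁻¹ S(m)`.
Rescaled coordinates (`param`) identify the parameter space with a Euclidean space whose norm is
`‖·‖_{W†}`, so that the contraction constant refers to the norm of the theorem and not merely to
an equivalent one.

Full column rank makes `I₀` invertible (`isUnit_det_Fisher`), so zeros of `S` are exactly fixed
points of `T`, and `T(m†) - m† = δm̂`. The part of `T` that does not depend on `ε` and `β` is `C²`,
with derivative `1 - I₀⁻¹ G'(m†)ᵀ Σ₀⁻¹ G'(m†) = 0` at `m†`; the rest is affine in `(ε, β)`, and its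
`β`-term does not depend on `m`. Hence `T` is Lipschitz on the ball of radius `r` with constant
`M (r + ‖ε‖)` (`newton_lipschitz`).

For small `r` and `ε` this constant is at most `1/2`, which gives existence, uniqueness and
`‖m̂ - m†‖ ≤ ½ ‖m̂ - m†‖ + ‖δm̂‖`, that is, `‖m̂ - m†‖ ≤ 2 ‖δm̂‖`. The quadratic estimate comes from
`m̂ - m† - δm̂ = T(m̂) - T(m†)` and the same Lipschitz bound with `r = ‖m̂ - m†‖`
(`newton_fixed_point`).
-/


open Matrix

noncomputable section

/-- The parameter-to-observation map `G(q; y)_j = Σ_n q_n k(x_j, y_n)`. -/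
def Gfun {d dO No Ns : ℕ}
    (k : EuclideanSpace ℝ (Fin dO) → EuclideanSpace ℝ (Fin d) → ℝ)
    (x : Fin No → EuclideanSpace ℝ (Fin dO))
    (m : (Fin Ns → ℝ) × (Fin Ns → EuclideanSpace ℝ (Fin d))) : Fin No → ℝ :=
  fun j => ∑ n, m.1 n * k (x j) (m.2 n)

/-- The Jacobian matrix `G'(m)` of `G` with respect to `m = (q; y)`. -/
def Jmat {d dO No Ns : ℕ}
    (k : EuclideanSpace ℝ (Fin dO) → EuclideanSpace ℝ (Fin d) → ℝ)
    (x : Fin No → EuclideanSpace ℝ (Fin dO))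
    (q : Fin Ns → ℝ) (y : Fin Ns → EuclideanSpace ℝ (Fin d)) :
    Matrix (Fin No) (Fin Ns ⊕ Fin Ns × Fin d) ℝ :=
  Matrix.of fun j => Sum.elim (fun n => k (x j) (y n))
    (fun p => q p.1 * fderiv ℝ (k (x j)) (y p.1) (EuclideanSpace.single p.2 1))

/-- The Fisher information matrix `I₀ = G'(m†)ᵀ Σ₀⁻¹ G'(m†)`. -/
def Fisher {d dO No Ns : ℕ}
    (k : EuclideanSpace ℝ (Fin dO) → EuclideanSpace ℝ (Fin d) → ℝ)
    (x : Fin No → EuclideanSpace ℝ (Fin dO)) (σ0 : Fin No → ℝ)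
    (q : Fin Ns → ℝ) (y : Fin Ns → EuclideanSpace ℝ (Fin d)) :
    Matrix (Fin Ns ⊕ Fin Ns × Fin d) (Fin Ns ⊕ Fin Ns × Fin d) ℝ :=
  (Jmat k x q y)ᵀ * Matrix.diagonal (fun j => (σ0 j)⁻¹) * Jmat k x q y

/-- The sign vector `(ρ; 0)`. -/
def rho0 (d : ℕ) {Ns : ℕ} (q : Fin Ns → ℝ) : (Fin Ns ⊕ Fin Ns × Fin d) → ℝ :=
  Sum.elim (fun n => Real.sign (q n)) 0

/-- The linearized estimate `δm̂(ε) = I₀⁻¹(G'(m†)ᵀ Σ₀⁻¹ ε − β(ρ; 0))`. -/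
def deltaHat {d dO No Ns : ℕ}
    (k : EuclideanSpace ℝ (Fin dO) → EuclideanSpace ℝ (Fin d) → ℝ)
    (x : Fin No → EuclideanSpace ℝ (Fin dO)) (σ0 : Fin No → ℝ)
    (q : Fin Ns → ℝ) (y : Fin Ns → EuclideanSpace ℝ (Fin d))
    (ε : Fin No → ℝ) (β : ℝ) : (Fin Ns ⊕ Fin Ns × Fin d) → ℝ :=
  (Fisher k x σ0 q y)⁻¹ *ᵥ ((Jmat k x q y)ᵀ *ᵥ (fun j => ε j / σ0 j) - β • rho0 d q)

/-- The residual of the stationarity equation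
`S(m) = G'(m)ᵀ Σ₀⁻¹(G(m) − G(m†) − ε) + β(ρ; 0)`. -/
def Smap {d dO No Ns : ℕ}
    (k : EuclideanSpace ℝ (Fin dO) → EuclideanSpace ℝ (Fin d) → ℝ)
    (x : Fin No → EuclideanSpace ℝ (Fin dO)) (σ0 : Fin No → ℝ)
    (mdag : (Fin Ns → ℝ) × (Fin Ns → EuclideanSpace ℝ (Fin d)))
    (ε : Fin No → ℝ) (β : ℝ)
    (m : (Fin Ns → ℝ) × (Fin Ns → EuclideanSpace ℝ (Fin d))) :
    (Fin Ns ⊕ Fin Ns × Fin d) → ℝ :=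
  (Jmat k x m.1 m.2)ᵀ *ᵥ (fun j => (Gfun k x m j - Gfun k x mdag j - ε j) / σ0 j) +
    β • rho0 d mdag.1

/-- Squared weighted `W†`-norm of a perturbation, with weights built from `qd`. -/
def WnormSq {d Ns : ℕ} (qd : Fin Ns → ℝ)
    (δ : (Fin Ns → ℝ) × (Fin Ns → EuclideanSpace ℝ (Fin d))) : ℝ :=
  (∑ n, (δ.1 n) ^ 2 / (4 * |qd n|)) + ∑ n, |qd n| * ‖δ.2 n‖ ^ 2

/-- Weighted `W†`-norm. -/
def Wnorm {d Ns : ℕ} (qd : Fin Ns → ℝ)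
    (δ : (Fin Ns → ℝ) × (Fin Ns → EuclideanSpace ℝ (Fin d))) : ℝ :=
  Real.sqrt (WnormSq qd δ)

/-- Reinterpret a coordinate vector indexed by `Fin Ns ⊕ Fin Ns × Fin d` as a parameter
perturbation `(δq; δy)`. -/
def toParam {d Ns : ℕ} (v : (Fin Ns ⊕ Fin Ns × Fin d) → ℝ) :
    (Fin Ns → ℝ) × (Fin Ns → EuclideanSpace ℝ (Fin d)) :=
  (fun n => v (Sum.inl n),
   fun n => (EuclideanSpace.equiv (Fin d) ℝ).symm fun i => v (Sum.inr (n, i)))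

/-- The `Σ₀⁻¹`-weighted Euclidean norm on the observation space. -/
def enorm {No : ℕ} (σ0 ε : Fin No → ℝ) : ℝ :=
  Real.sqrt (∑ j, ε j ^ 2 / σ0 j)

/-! ### The simplified Newton map in a Banach space -/

/-- The quasi-Newton map `T(e) = e - (Σ_j (g_j(e) - g_j(e₀) - ε_j) p_j(e) + β b)`, whose fixed
points are the zeros of the bracket. In the application `g_j` is the `j`-th observation, and
`p_j` and `b` are the `j`-th row of `Σ₀⁻¹ G'` and the vector `(ρ; 0)`, both preconditioned by
`I₀⁻¹`. -/
def newtonMap {E ι : Type*} [NormedAddCommGroup E] [NormedSpace ℝ E] [Fintype ι]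
    (g : ι → E → ℝ) (p : ι → E → E) (e₀ b : E) (ε : ι → ℝ) (β : ℝ) (e : E) : E :=
  e - (∑ j, (g j e - g j e₀ - ε j) • p j e + β • b)

/-- The quasi-Newton map `T` satisfies, on small balls of radius `r` around `e₀`, a Lipschitz
estimate whose constant is of order `r + ‖ε‖`: up to a constant, `T` is the sum of a `C²` map
with vanishing derivative at `e₀` and of a term linear in `ε` whose coefficients are locally
Lipschitz. The hypothesis `hd` says that the preconditioned Hessian at `e₀`, for `ε = 0`, is the
identity. -/
lemma newton_lipschitz {E ι : Type*} [NormedAddCommGroup E] [NormedSpace ℝ E]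
    [Fintype ι] (g : ι → E → ℝ) (p : ι → E → E)
    (hg : ∀ j, ContDiff ℝ 2 (g j)) (hp : ∀ j, ContDiff ℝ 2 (p j)) (e₀ b : E)
    (hd : ∀ v, ∑ j, fderiv ℝ (g j) e₀ v • p j e₀ = v) :
    ∃ M > (0 : ℝ), ∃ r₀ > (0 : ℝ), ∀ (ε : ι → ℝ) (β r : ℝ), r ≤ r₀ →
      ∀ e e', ‖e - e₀‖ ≤ r → ‖e' - e₀‖ ≤ r →
        ‖newtonMap g p e₀ b ε β e - newtonMap g p e₀ b ε β e'‖
          ≤ M * (r + ‖ε‖) * ‖e - e'‖ := by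
  set H : E → E := fun e => e - ∑ j, (g j e - g j e₀) • p j e with hH
  have hHc : ContDiff ℝ 2 H :=
    contDiff_id.sub (ContDiff.sum fun j _ => ((hg j).sub contDiff_const).smul (hp j))
  have hH0 : fderiv ℝ H e₀ = 0 := by
    have h1 : HasFDerivAt H _ e₀ :=
      (hasFDerivAt_id e₀).sub (HasFDerivAt.fun_sum (u := Finset.univ) fun j _ =>
        ((((hg j).differentiable (by norm_num) e₀).hasFDerivAt).sub_const (g j e₀)).smul
          (((hp j).differentiable (by norm_num) e₀).hasFDerivAt))
    rw [h1.fderiv]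
    ext v
    simp [hd v]
  have hH' : ContDiff ℝ 1 (fderiv ℝ H) := hHc.fderiv_right (by norm_num)
  obtain ⟨K₁, t₁, ht₁, hK₁⟩ := (hH'.contDiffAt (x := e₀)).exists_lipschitzOnWith
  have hP : ContDiff ℝ 1 (fun e j => p j e) :=
    contDiff_pi.2 fun j => (hp j).of_le (by norm_num)
  obtain ⟨K₂, t₂, ht₂, hK₂⟩ := (hP.contDiffAt (x := e₀)).exists_lipschitzOnWith
  obtain ⟨r₀, hr₀, hball⟩ := Metric.nhds_basis_closedBall.mem_iff.1 (Filter.inter_mem ht₁ ht₂)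
  refine ⟨K₁ + Fintype.card ι * K₂ + 1, by positivity, r₀, hr₀, ?_⟩
  intro ε β r hr e e' he he'
  have hr0 : 0 ≤ r := (norm_nonneg _).trans he
  have hmem : ∀ z, ‖z - e₀‖ ≤ r → z ∈ t₁ ∩ t₂ := fun z hz =>
    hball (by rw [Metric.mem_closedBall, dist_eq_norm]; exact hz.trans hr)
  have h0 : e₀ ∈ t₁ ∩ t₂ := hmem e₀ (by simpa using hr0)
  have hHL : ‖H e - H e'‖ ≤ K₁ * r * ‖e - e'‖ := by
    refine (convex_closedBall e₀ r).norm_image_sub_le_of_norm_fderiv_le (𝕜 := ℝ)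
      (fun z _ => hHc.differentiable (by norm_num) z) (fun z hz => ?_)
      (by rwa [Metric.mem_closedBall, dist_eq_norm]) (by rwa [Metric.mem_closedBall, dist_eq_norm])
    rw [Metric.mem_closedBall, dist_eq_norm] at hz
    have := hK₁.dist_le_mul z (hmem z hz).1 e₀ h0.1
    rw [dist_eq_norm, dist_eq_norm, hH0, sub_zero] at this
    exact this.trans (by gcongr)
  have hPL : ‖∑ j, ε j • (p j e - p j e')‖ ≤ Fintype.card ι * K₂ * ‖ε‖ * ‖e - e'‖ := by
    have h1 := hK₂.dist_le_mul e (hmem e he).2 e' (hmem e' he').2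
    rw [dist_eq_norm, dist_eq_norm] at h1
    have h2 : ∀ j, ‖ε j • (p j e - p j e')‖ ≤ ‖ε‖ * (K₂ * ‖e - e'‖) := fun j => by
      rw [norm_smul]
      exact mul_le_mul (norm_le_pi_norm ε j)
        ((norm_le_pi_norm ((fun j => p j e) - fun j => p j e') j).trans h1)
        (norm_nonneg _) (norm_nonneg _)
    refine (norm_sum_le _ _).trans ((Finset.sum_le_sum fun j _ => h2 j).trans (le_of_eq ?_))
    simp; ring
  have hsplit : newtonMap g p e₀ b ε β e - newtonMap g p e₀ b ε β e'
      = (H e - H e') + ∑ j, ε j • (p j e - p j e') := by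
    simp only [newtonMap, hH, sub_smul, smul_sub, Finset.sum_sub_distrib]
    abel
  rw [hsplit]
  refine (norm_add_le _ _).trans ((add_le_add hHL hPL).trans ?_)
  rw [← add_mul]
  gcongr
  have hK₁' := K₁.coe_nonneg
  have : 0 ≤ (Fintype.card ι * K₂ : ℝ) := by positivity
  nlinarith [mul_nonneg this hr0, mul_nonneg hK₁' (norm_nonneg ε), norm_nonneg ε]

/-- Existence, local uniqueness and error estimates for the fixed point of `newtonMap`, in an
abstract Banach space and with the supremum norm of `ε`. The vector `∑ j, ε j • p j e₀ - β • b` is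
`δm̂`. -/
lemma newton_fixed_point {E ι : Type*} [NormedAddCommGroup E] [NormedSpace ℝ E] [CompleteSpace E]
    [Fintype ι] (g : ι → E → ℝ) (p : ι → E → E)
    (hg : ∀ j, ContDiff ℝ 2 (g j)) (hp : ∀ j, ContDiff ℝ 2 (p j)) (e₀ b : E)
    (hd : ∀ v, ∑ j, fderiv ℝ (g j) e₀ v • p j e₀ = v) :
    ∃ C > (0 : ℝ), ∃ rhat > (0 : ℝ), ∀ (ε : ι → ℝ) (β : ℝ), 0 < β →
      C * (‖ε‖ + β) ≤ 1 → ∃ e,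
        newtonMap g p e₀ b ε β e = e ∧
        (∀ e', ‖e' - e₀‖ ≤ 3 / 2 * rhat → newtonMap g p e₀ b ε β e' = e' → e' = e) ∧
        ‖e - e₀‖ ≤ rhat ∧
        ‖e - e₀‖ ≤ 2 * ‖∑ j, ε j • p j e₀ - β • b‖ ∧
        2 * ‖∑ j, ε j • p j e₀ - β • b‖ ≤ C * (‖ε‖ + β) ∧
        ‖e - e₀ - (∑ j, ε j • p j e₀ - β • b)‖ ≤ C ^ 2 * (‖ε‖ + β) ^ 2 := by
  obtain ⟨M, hM, r₀, hr₀, hLip⟩ := newton_lipschitz g p hg hp e₀ b hd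
  set D : ℝ := ∑ j, ‖p j e₀‖ + ‖b‖ + 1 with hD
  have hDpos : 0 < D := by positivity
  set rh : ℝ := min (2 / 3 * r₀) (1 / (6 * M)) with hrh
  have hrpos : 0 < rh := by positivity
  have hr1 : 3 / 2 * rh ≤ r₀ := by
    have := min_le_left (2 / 3 * r₀) (1 / (6 * M)); linarith
  have hr2 : M * (3 / 2 * rh) ≤ 1 / 4 := by
    have h := min_le_right (2 / 3 * r₀) (1 / (6 * M))
    have h' : rh * (6 * M) ≤ 1 := (le_div_iff₀ (by positivity)).1 h
    linarith
  -- The summands serve, in order: contraction, self-mapping of the ball, the bound on `δ`,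
  -- and the quadratic estimate (for which `C ≤ C ^ 2` is used).
  set C : ℝ := 4 * M + 2 * D / rh + 2 * D + M * (2 * D + 1) * (2 * D) + 1 with hC
  have hq : 0 < M * (2 * D + 1) * (2 * D) := by positivity
  have hq' : 0 < 2 * D / rh := by positivity
  refine ⟨C, by positivity, rh, hrpos, ?_⟩
  intro ε β hβ hs
  set s : ℝ := ‖ε‖ + β with hs'
  have hεs : ‖ε‖ ≤ s := by linarith
  have hs0 : 0 ≤ s := by positivity
  set T := newtonMap g p e₀ b ε β with hT
  set δ := ∑ j, ε j • p j e₀ - β • b with hδ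
  have hT0 : T e₀ = e₀ + δ := by
    simp only [hT, newtonMap, hδ, sub_self, zero_sub, neg_smul, Finset.sum_neg_distrib]
    abel
  have hδD : ‖δ‖ ≤ D * s := by
    have h1 : ‖∑ j, ε j • p j e₀‖ ≤ (∑ j, ‖p j e₀‖) * ‖ε‖ := by
      rw [Finset.sum_mul]
      refine (norm_sum_le _ _).trans (Finset.sum_le_sum fun j _ => ?_)
      rw [norm_smul, mul_comm]
      gcongr
      exact norm_le_pi_norm ε j
    have h2 : ‖β • b‖ = β * ‖b‖ := by rw [norm_smul, Real.norm_of_nonneg hβ.le]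
    have h3 : 0 ≤ ∑ j, ‖p j e₀‖ := Finset.sum_nonneg fun _ _ => norm_nonneg _
    have := norm_sub_le (∑ j, ε j • p j e₀) (β • b)
    rw [h2] at this
    have hεn := norm_nonneg ε
    have hbn := norm_nonneg b
    simp only [hD, hs']
    nlinarith [mul_nonneg h3 hβ.le, mul_nonneg hεn hbn]
  have hCge : ∀ a, 0 ≤ C - a → a * s ≤ 1 := fun a ha =>
    (mul_le_mul_of_nonneg_right (sub_nonneg.1 ha) hs0).trans hs
  have h4M : 4 * M * s ≤ 1 := hCge _ (by rw [hC]; linarith)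
  have h2D : 2 * (D * s) ≤ rh := by
    have := hCge (2 * D / rh) (by rw [hC]; linarith)
    rw [div_mul_eq_mul_div, div_le_one hrpos] at this
    linarith
  have hMε : M * ‖ε‖ ≤ 1 / 4 := by nlinarith
  have hhalf : ∀ e e', ‖e - e₀‖ ≤ 3 / 2 * rh → ‖e' - e₀‖ ≤ 3 / 2 * rh →
      ‖T e - T e'‖ ≤ 1 / 2 * ‖e - e'‖ := fun e e' he he' => by
    refine (hLip ε β _ hr1 e e' he he').trans ?_
    gcongr
    linarith
  have hmaps : Set.MapsTo T (Metric.closedBall e₀ rh) (Metric.closedBall e₀ rh) := by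
    intro e he
    rw [Metric.mem_closedBall, dist_eq_norm] at he ⊢
    have h1 := hhalf e e₀ (by linarith) (by simp; positivity)
    have h2 : T e - e₀ = (T e - T e₀) + δ := by rw [hT0]; abel
    rw [h2]
    refine (norm_add_le _ _).trans ?_
    linarith
  have hcontr : ContractingWith (1 / 2) (hmaps.restrict T _ _) := by
    refine ⟨by norm_num, LipschitzWith.of_dist_le_mul fun e e' => ?_⟩
    have he := e.2
    have he' := e'.2
    rw [Metric.mem_closedBall, dist_eq_norm] at he he'
    have := hhalf e e' (by linarith) (by linarith)
    rw [Subtype.dist_eq, Subtype.dist_eq, dist_eq_norm, dist_eq_norm]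
    simpa using this
  obtain ⟨e, heB, hfix, -⟩ := hcontr.exists_fixedPoint' Metric.isClosed_closedBall.isComplete
    hmaps (Metric.mem_closedBall_self hrpos.le) (edist_ne_top _ _)
  have hfix : T e = e := hfix
  rw [Metric.mem_closedBall, dist_eq_norm] at heB
  have heB' : ‖e - e₀‖ ≤ 3 / 2 * rh := by linarith
  have hdiff : e - e₀ - δ = T e - T e₀ := by rw [hT0, hfix]; abel
  have he2 : ‖e - e₀‖ ≤ 2 * ‖δ‖ := by
    have h1 := hhalf e e₀ heB' (by simp; positivity)
    rw [← hdiff] at h1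
    have h2 := norm_sub_norm_le (e - e₀) δ
    linarith
  refine ⟨e, hfix, fun e' he' hf' => ?_, heB, he2, ?_, ?_⟩
  · have h1 := hhalf e' e he' heB'
    rw [hf', hfix] at h1
    have h2 := norm_nonneg (e' - e)
    exact sub_eq_zero.1 (norm_eq_zero.1 (by linarith))
  · have : 2 * D * s ≤ C * s := mul_le_mul_of_nonneg_right (by rw [hC]; linarith) hs0
    linarith
  · rw [hdiff]
    -- The Lipschitz estimate is used on the smallest ball that contains the solution.
    refine (hLip ε β ‖e - e₀‖ (heB'.trans hr1) e e₀ le_rfl (by simp)).trans ?_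
    have ht : ‖e - e₀‖ ≤ 2 * D * s := by linarith
    calc M * (‖e - e₀‖ + ‖ε‖) * ‖e - e₀‖ ≤ M * (2 * D * s + s) * (2 * D * s) := by gcongr
      _ = M * (2 * D + 1) * (2 * D) * s ^ 2 := by ring
      _ ≤ C ^ 2 * s ^ 2 := by
        gcongr
        have h1 : M * (2 * D + 1) * (2 * D) ≤ C := by rw [hC]; linarith
        have h2 : 1 ≤ C := by rw [hC]; linarith
        nlinarith

/-! ### Weighted coordinates and the preconditioned residual -/

/-- Inverse square roots of the weights `1/(4|q_n|)` and `|q_n|` of `‖·‖_{W†}`. -/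
def wt {d Ns : ℕ} (qd : Fin Ns → ℝ) : Fin Ns ⊕ Fin Ns × Fin d → ℝ :=
  Sum.elim (fun n => 2 * √|qd n|) (fun p => (√|qd p.1|)⁻¹)

lemma wt_pos {d Ns : ℕ} {qd : Fin Ns → ℝ} (hqd : ∀ n, qd n ≠ 0) (i : Fin Ns ⊕ Fin Ns × Fin d) :
    0 < wt qd i := by
  rcases i with n | ⟨n, i⟩ <;> have := abs_pos.2 (hqd n) <;> simp only [wt, Sum.elim_inl,
    Sum.elim_inr] <;> positivity

/-- The weighted coordinates: a bijection from Euclidean space onto the parameter space that turns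
the Euclidean norm into `‖·‖_{W†}`. -/
def param {d Ns : ℕ} (qd : Fin Ns → ℝ) (e : EuclideanSpace ℝ (Fin Ns ⊕ Fin Ns × Fin d)) :
    (Fin Ns → ℝ) × (Fin Ns → EuclideanSpace ℝ (Fin d)) :=
  toParam (fun i => wt qd i * e i)

lemma Wnorm_param {d Ns : ℕ} {qd : Fin Ns → ℝ} (hqd : ∀ n, qd n ≠ 0)
    (e : EuclideanSpace ℝ (Fin Ns ⊕ Fin Ns × Fin d)) : Wnorm qd (param qd e) = ‖e‖ := by
  rw [EuclideanSpace.norm_eq, Wnorm, WnormSq, Fintype.sum_sum_type, Fintype.sum_prod_type]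
  congr 2
  · refine Finset.sum_congr rfl fun n _ => ?_
    have h := abs_pos.2 (hqd n)
    have h2 := Real.sq_sqrt h.le
    simp only [param, toParam, wt, Sum.elim_inl, Real.norm_eq_abs, sq_abs, mul_pow, h2]
    field_simp
    ring
  · refine Finset.sum_congr rfl fun n _ => ?_
    have h := abs_pos.2 (hqd n)
    have h2 := Real.sq_sqrt h.le
    rw [EuclideanSpace.real_norm_sq_eq, Finset.mul_sum]
    refine Finset.sum_congr rfl fun i _ => ?_
    simp only [param, toParam, wt, Sum.elim_inr, Real.norm_eq_abs, sq_abs,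
      EuclideanSpace.equiv, PiLp.coe_symm_continuousLinearEquiv]
    rw [mul_pow, inv_pow, h2]
    field_simp

lemma param_sub {d Ns : ℕ} (qd : Fin Ns → ℝ)
    (e e' : EuclideanSpace ℝ (Fin Ns ⊕ Fin Ns × Fin d)) :
    param qd (e - e') = param qd e - param qd e' := by
  ext <;> simp [param, toParam, EuclideanSpace.equiv, mul_sub]

lemma param_surjective {d Ns : ℕ} {qd : Fin Ns → ℝ} (hqd : ∀ n, qd n ≠ 0) :
    Function.Surjective (param (d := d) qd) := by
  intro m
  refine ⟨WithLp.toLp 2 fun i => Sum.elim m.1 (fun p => m.2 p.1 p.2) i / wt qd i, ?_⟩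
  have h : ∀ i : Fin Ns ⊕ Fin Ns × Fin d, wt qd i ≠ 0 := fun i => (wt_pos hqd i).ne'
  ext <;> simp [param, toParam, EuclideanSpace.equiv, mul_div_cancel₀, h]

/-- Application of `A⁻¹`, read off in the weighted coordinates. -/
def precond {d Ns : ℕ} (qd : Fin Ns → ℝ)
    (A : Matrix (Fin Ns ⊕ Fin Ns × Fin d) (Fin Ns ⊕ Fin Ns × Fin d) ℝ) :
    ((Fin Ns ⊕ Fin Ns × Fin d) → ℝ) →ₗ[ℝ] EuclideanSpace ℝ (Fin Ns ⊕ Fin Ns × Fin d) where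
  toFun v := WithLp.toLp 2 fun i => (A⁻¹ *ᵥ v) i / wt qd i
  map_add' v v' := by ext i; simp [Matrix.mulVec_add, add_div]
  map_smul' c v := by ext i; simp [Matrix.mulVec_smul, mul_div_assoc]

lemma precond_apply {d Ns : ℕ} (qd : Fin Ns → ℝ)
    (A : Matrix (Fin Ns ⊕ Fin Ns × Fin d) (Fin Ns ⊕ Fin Ns × Fin d) ℝ)
    (v : (Fin Ns ⊕ Fin Ns × Fin d) → ℝ) (i : Fin Ns ⊕ Fin Ns × Fin d) :
    precond qd A v i = (A⁻¹ *ᵥ v) i / wt qd i := rfl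

lemma precond_eq_zero {d Ns : ℕ} {qd : Fin Ns → ℝ} (hqd : ∀ n, qd n ≠ 0)
    {A : Matrix (Fin Ns ⊕ Fin Ns × Fin d) (Fin Ns ⊕ Fin Ns × Fin d) ℝ} (hA : IsUnit A.det)
    {v : (Fin Ns ⊕ Fin Ns × Fin d) → ℝ} : precond qd A v = 0 ↔ v = 0 := by
  refine ⟨fun h => ?_, fun h => by rw [h, map_zero]⟩
  have h1 : A⁻¹ *ᵥ v = 0 := by
    ext i
    have := congrArg (fun e => e i) h
    simpa [precond_apply, (wt_pos hqd i).ne'] using this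
  have h2 : A *ᵥ (A⁻¹ *ᵥ v) = v := by
    rw [Matrix.mulVec_mulVec, Matrix.mul_nonsing_inv _ hA, Matrix.one_mulVec]
  rw [← h2, h1, Matrix.mulVec_zero]

/-- `I₀` is positive definite, being `JᵀΣ₀⁻¹J` with `J` injective. -/
lemma isUnit_det_Fisher {d dO No Ns : ℕ}
    (k : EuclideanSpace ℝ (Fin dO) → EuclideanSpace ℝ (Fin d) → ℝ)
    (x : Fin No → EuclideanSpace ℝ (Fin dO)) (σ0 : Fin No → ℝ) (hσ0 : ∀ j, 0 < σ0 j)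
    (q : Fin Ns → ℝ) (y : Fin Ns → EuclideanSpace ℝ (Fin d))
    (hrank : Function.Injective (Jmat k x q y).mulVec) : IsUnit (Fisher k x σ0 q y).det := by
  have h : (Matrix.diagonal fun j => (σ0 j)⁻¹).PosDef :=
    Matrix.PosDef.diagonal fun j => inv_pos.2 (hσ0 j)
  have h2 := h.conjTranspose_mul_mul_same hrank
  rw [Matrix.conjTranspose_eq_transpose_of_trivial] at h2
  exact (h2.det_pos).ne'.isUnit

/-- The `j`-th observation in weighted coordinates. -/
def obs {d dO No Ns : ℕ}
    (k : EuclideanSpace ℝ (Fin dO) → EuclideanSpace ℝ (Fin d) → ℝ)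
    (x : Fin No → EuclideanSpace ℝ (Fin dO)) (qd : Fin Ns → ℝ) (j : Fin No)
    (e : EuclideanSpace ℝ (Fin Ns ⊕ Fin Ns × Fin d)) : ℝ :=
  Gfun k x (param qd e) j

/-- The `j`-th row of `Σ₀⁻¹ G'(m)`, preconditioned by `A⁻¹`, in weighted coordinates. -/
def prow {d dO No Ns : ℕ}
    (k : EuclideanSpace ℝ (Fin dO) → EuclideanSpace ℝ (Fin d) → ℝ)
    (x : Fin No → EuclideanSpace ℝ (Fin dO)) (σ0 : Fin No → ℝ) (qd : Fin Ns → ℝ)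
    (A : Matrix (Fin Ns ⊕ Fin Ns × Fin d) (Fin Ns ⊕ Fin Ns × Fin d) ℝ) (j : Fin No)
    (e : EuclideanSpace ℝ (Fin Ns ⊕ Fin Ns × Fin d)) :
    EuclideanSpace ℝ (Fin Ns ⊕ Fin Ns × Fin d) :=
  precond qd A ((σ0 j)⁻¹ • Jmat k x (param qd e).1 (param qd e).2 j)

lemma sum_smul_prow {d dO No Ns : ℕ}
    (k : EuclideanSpace ℝ (Fin dO) → EuclideanSpace ℝ (Fin d) → ℝ)
    (x : Fin No → EuclideanSpace ℝ (Fin dO)) (σ0 : Fin No → ℝ) (qd : Fin Ns → ℝ)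
    (A : Matrix (Fin Ns ⊕ Fin Ns × Fin d) (Fin Ns ⊕ Fin Ns × Fin d) ℝ)
    (e : EuclideanSpace ℝ (Fin Ns ⊕ Fin Ns × Fin d)) (c : Fin No → ℝ) :
    ∑ j, c j • prow k x σ0 qd A j e =
      precond qd A ((Jmat k x (param qd e).1 (param qd e).2)ᵀ *ᵥ fun j => c j / σ0 j) := by
  simp only [prow, ← map_smul, ← map_sum]
  congr 1
  ext i
  simp only [Finset.sum_apply, Pi.smul_apply, smul_eq_mul, Matrix.mulVec, dotProduct,
    Matrix.transpose_apply]
  exact Finset.sum_congr rfl fun j _ => by ring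

/-- The `q`-component of `param`, as a continuous linear map. -/
def paramQ {d Ns : ℕ} (qd : Fin Ns → ℝ) (n : Fin Ns) :
    EuclideanSpace ℝ (Fin Ns ⊕ Fin Ns × Fin d) →L[ℝ] ℝ :=
  LinearMap.toContinuousLinearMap
    { toFun := fun e => (param qd e).1 n
      map_add' := fun e e' => by simp [param, toParam, mul_add]
      map_smul' := fun c e => by simp [param, toParam]; ring }

/-- The `y`-component of `param`, as a continuous linear map. -/
def paramY {d Ns : ℕ} (qd : Fin Ns → ℝ) (n : Fin Ns) :
    EuclideanSpace ℝ (Fin Ns ⊕ Fin Ns × Fin d) →L[ℝ] EuclideanSpace ℝ (Fin d) :=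
  LinearMap.toContinuousLinearMap
    { toFun := fun e => (param qd e).2 n
      map_add' := fun e e' => by ext i; simp [param, toParam, EuclideanSpace.equiv, mul_add]
      map_smul' := fun c e => by ext i; simp [param, toParam, EuclideanSpace.equiv]; ring }

lemma obs_eq {d dO No Ns : ℕ}
    (k : EuclideanSpace ℝ (Fin dO) → EuclideanSpace ℝ (Fin d) → ℝ)
    (x : Fin No → EuclideanSpace ℝ (Fin dO)) (qd : Fin Ns → ℝ) (j : Fin No) :
    obs k x qd j = fun e => ∑ n, paramQ qd n e * k (x j) (paramY (d := d) qd n e) := rfl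

lemma contDiff_obs {d dO No Ns : ℕ}
    (k : EuclideanSpace ℝ (Fin dO) → EuclideanSpace ℝ (Fin d) → ℝ)
    (hk : ∀ x, ContDiff ℝ 3 (k x))
    (x : Fin No → EuclideanSpace ℝ (Fin dO)) (qd : Fin Ns → ℝ) (j : Fin No) :
    ContDiff ℝ 2 (obs k x qd j) := by
  rw [obs_eq]
  exact ContDiff.sum fun n _ => (paramQ qd n).contDiff.mul
    (((hk (x j)).of_le (by norm_num)).comp (paramY qd n).contDiff)

lemma contDiff_prow {d dO No Ns : ℕ}
    (k : EuclideanSpace ℝ (Fin dO) → EuclideanSpace ℝ (Fin d) → ℝ)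
    (hk : ∀ x, ContDiff ℝ 3 (k x))
    (x : Fin No → EuclideanSpace ℝ (Fin dO)) (σ0 : Fin No → ℝ) (qd : Fin Ns → ℝ)
    (A : Matrix (Fin Ns ⊕ Fin Ns × Fin d) (Fin Ns ⊕ Fin Ns × Fin d) ℝ) (j : Fin No) :
    ContDiff ℝ 2 (prow k x σ0 qd A j) := by
  have h : ContDiff ℝ 2 fun e : EuclideanSpace ℝ (Fin Ns ⊕ Fin Ns × Fin d) =>
      (σ0 j)⁻¹ • Jmat k x (param qd e).1 (param qd e).2 j := by
    refine ContDiff.const_smul _ (contDiff_pi.2 fun i => ?_)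
    rcases i with n | ⟨n, i⟩
    · exact ((hk (x j)).of_le (by norm_num)).comp (paramY qd n).contDiff
    · exact (paramQ qd n).contDiff.mul
        ((((hk (x j)).fderiv_right (m := 2) (by norm_num)).comp
          (paramY qd n).contDiff).clm_apply contDiff_const)
  exact (LinearMap.toContinuousLinearMap (precond qd A)).contDiff.comp h

/-- `Jmat` is the Jacobian of `Gfun`, here in weighted coordinates. -/
lemma fderiv_obs {d dO No Ns : ℕ}
    (k : EuclideanSpace ℝ (Fin dO) → EuclideanSpace ℝ (Fin d) → ℝ)
    (hk : ∀ x, ContDiff ℝ 3 (k x))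
    (x : Fin No → EuclideanSpace ℝ (Fin dO)) (qd : Fin Ns → ℝ) (j : Fin No)
    (e v : EuclideanSpace ℝ (Fin Ns ⊕ Fin Ns × Fin d)) :
    fderiv ℝ (obs k x qd j) e v =
      (Jmat k x (param qd e).1 (param qd e).2 *ᵥ fun i => wt qd i * v i) j := by
  have h1 := HasFDerivAt.fun_sum (u := Finset.univ) fun n _ =>
    ((paramQ qd n).hasFDerivAt (x := e)).mul
      ((((hk (x j)).differentiable (by norm_num) (paramY qd n e)).hasFDerivAt).comp e
        ((paramY qd n).hasFDerivAt (x := e)))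
  have h1' : fderiv ℝ (obs k x qd j) e = _ := h1.fderiv
  rw [h1']
  have hY : ∀ (n : Fin Ns) (l : EuclideanSpace ℝ (Fin d) →L[ℝ] ℝ), l (paramY qd n v) =
      ∑ i, (wt qd (Sum.inr (n, i)) * v (Sum.inr (n, i))) * l (EuclideanSpace.single i 1) := by
    intro n l
    conv_lhs => rw [← (EuclideanSpace.basisFun (Fin d) ℝ).sum_repr (paramY qd n v)]
    simp only [map_sum, map_smul, smul_eq_mul, EuclideanSpace.basisFun_repr,
      EuclideanSpace.basisFun_apply]
    rfl
  simp only [Matrix.mulVec, dotProduct, Jmat, Matrix.of_apply, Fintype.sum_sum_type,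
    Fintype.sum_prod_type, Sum.elim_inl, Sum.elim_inr]
  rw [FunLike.coe_sum, Finset.sum_apply, ← Finset.sum_add_distrib]
  refine Finset.sum_congr rfl fun n _ => ?_
  simp only [_root_.add_apply, _root_.smul_apply,
    ContinuousLinearMap.comp_apply, smul_eq_mul, hY, Function.comp_apply, Finset.mul_sum]
  rw [add_comm]
  congr 1
  refine Finset.sum_congr rfl fun i _ => ?_
  change (param qd e).1 n * (_ * fderiv ℝ (k (x j)) ((param qd e).2 n) _) = _
  ring

lemma norm_le_const_mul_enorm {No : ℕ} (σ0 : Fin No → ℝ) (hσ0 : ∀ j, 0 < σ0 j) :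
    ∃ c ≥ (1 : ℝ), ∀ ε : Fin No → ℝ, ‖ε‖ ≤ c * enorm σ0 ε := by
  have hnn : ∀ j, 0 ≤ √(σ0 j) := fun j => Real.sqrt_nonneg _
  refine ⟨1 + ∑ j, √(σ0 j), by linarith [Finset.sum_nonneg fun j (_ : j ∈ Finset.univ) => hnn j],
    fun ε => ?_⟩
  have h0 : 0 ≤ enorm σ0 ε := Real.sqrt_nonneg _
  have hS := Finset.sum_nonneg fun j (_ : j ∈ Finset.univ) => hnn j
  refine (pi_norm_le_iff_of_nonneg (by positivity)).2 fun j => ?_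
  have h1 : ε j ^ 2 / σ0 j ≤ ∑ j, ε j ^ 2 / σ0 j :=
    Finset.single_le_sum (f := fun j => ε j ^ 2 / σ0 j)
      (fun i _ => div_nonneg (sq_nonneg _) (hσ0 i).le) (Finset.mem_univ j)
  have h2 : |ε j| ≤ √(σ0 j) * enorm σ0 ε := by
    change |ε j| ≤ √(σ0 j) * √(∑ j, ε j ^ 2 / σ0 j)
    rw [← Real.sqrt_mul (hσ0 j).le]
    refine Real.abs_le_sqrt ?_
    rw [div_le_iff₀ (hσ0 j)] at h1
    linarith
  have h3 : √(σ0 j) ≤ ∑ j, √(σ0 j) :=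
    Finset.single_le_sum (fun i _ => hnn i) (Finset.mem_univ j)
  rw [Real.norm_eq_abs]
  refine h2.trans ?_
  gcongr
  linarith

/-! ### Error estimates -/

/-- **Error estimates for stationary points.** If `G'(m†)` has full column rank, then there are
`C₁ > 0` and `r̂ > 0` such that whenever `C₁(‖ε‖_{Σ₀⁻¹} + β) ≤ 1`, the stationarity equation has
a unique solution `m̂` in the closed `W†`-ball of radius `(3/2)r̂` around `m†`, and
`‖m̂ − m†‖_{W†} ≤ r̂`, `‖m̂ − m†‖_{W†} ≤ 2‖δm̂‖_{W†} ≤ C₁(‖ε‖_{Σ₀⁻¹} + β)` and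
`‖m̂ − m† − δm̂‖_{W†} ≤ C₁²(‖ε‖_{Σ₀⁻¹} + β)²`. -/
theorem stmt_7 (d dO No Ns : ℕ) (hd : 1 ≤ d) (hNs : 0 < Ns)
    (Ωs : Set (EuclideanSpace ℝ (Fin d))) (hΩc : IsCompact Ωs)
    (hΩi : (interior Ωs).Nonempty)
    (Ωo : Set (EuclideanSpace ℝ (Fin dO))) (hΩo : IsCompact Ωo)
    (k : EuclideanSpace ℝ (Fin dO) → EuclideanSpace ℝ (Fin d) → ℝ)
    (hk : ∀ x, ContDiff ℝ 3 (k x))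
    (x : Fin No → EuclideanSpace ℝ (Fin dO)) (hx : ∀ j, x j ∈ Ωo)
    (σ0 : Fin No → ℝ) (hσ0 : ∀ j, 0 < σ0 j)
    (Ck Ck' Ck'' Ck''' : ℝ)
    (hCk : ∀ xx ∈ Ωo, ∀ yy ∈ Ωs, |k xx yy| ≤ Ck)
    (hCk1 : ∀ xx ∈ Ωo, ∀ yy ∈ Ωs, ‖fderiv ℝ (k xx) yy‖ ≤ Ck')
    (hCk2 : ∀ xx ∈ Ωo, ∀ yy ∈ Ωs, ‖iteratedFDeriv ℝ 2 (k xx) yy‖ ≤ Ck'')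
    (hCk3 : ∀ xx ∈ Ωo, ∀ yy ∈ Ωs, ‖iteratedFDeriv ℝ 3 (k xx) yy‖ ≤ Ck''')
    (qd : Fin Ns → ℝ) (hqd : ∀ n, qd n ≠ 0)
    (yd : Fin Ns → EuclideanSpace ℝ (Fin d)) (hyd : ∀ n, yd n ∈ interior Ωs)
    (hydinj : Function.Injective yd)
    (hrank : Function.Injective (Jmat k x qd yd).mulVec) :
    ∃ C₁ > (0 : ℝ), ∃ rhat > (0 : ℝ), ∀ (ε : Fin No → ℝ) (β : ℝ), 0 < β →
      C₁ * (enorm σ0 ε + β) ≤ 1 →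
      ∃ mhat : (Fin Ns → ℝ) × (Fin Ns → EuclideanSpace ℝ (Fin d)),
        (Wnorm qd (mhat - (qd, yd)) ≤ 3 / 2 * rhat ∧
            Smap k x σ0 (qd, yd) ε β mhat = 0) ∧
        (∀ m', Wnorm qd (m' - (qd, yd)) ≤ 3 / 2 * rhat →
            Smap k x σ0 (qd, yd) ε β m' = 0 → m' = mhat) ∧
        Wnorm qd (mhat - (qd, yd)) ≤ rhat ∧
        Wnorm qd (mhat - (qd, yd)) ≤
          2 * Wnorm qd (toParam (deltaHat k x σ0 qd yd ε β)) ∧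
        2 * Wnorm qd (toParam (deltaHat k x σ0 qd yd ε β)) ≤ C₁ * (enorm σ0 ε + β) ∧
        Wnorm qd (mhat - (qd, yd) - toParam (deltaHat k x σ0 qd yd ε β)) ≤
          C₁ ^ 2 * (enorm σ0 ε + β) ^ 2 := by
  classical
  obtain ⟨e₀, he₀⟩ := param_surjective hqd (qd, yd)
  set A := Fisher k x σ0 qd yd with hA
  have hdet : IsUnit A.det := isUnit_det_Fisher k x σ0 hσ0 qd yd hrank
  obtain ⟨c, hc1, hc⟩ := norm_le_const_mul_enorm σ0 hσ0
  obtain ⟨C, hC, r, hr, hmain⟩ := newton_fixed_point (obs k x qd) (prow k x σ0 qd A)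
    (contDiff_obs k hk x qd) (contDiff_prow k hk x σ0 qd A) e₀ (precond qd A (rho0 d qd))
    (fun v => by
      rw [sum_smul_prow, he₀]
      simp only [fderiv_obs k hk x qd, he₀]
      have h1 : ((Jmat k x qd yd)ᵀ *ᵥ fun j =>
          (Jmat k x qd yd *ᵥ fun i => wt qd i * v i) j / σ0 j) = A *ᵥ fun i => wt qd i * v i := by
        rw [hA, Fisher, ← Matrix.mulVec_mulVec, ← Matrix.mulVec_mulVec]
        congr 1
        ext j
        rw [Matrix.mulVec_diagonal, div_eq_inv_mul]
      rw [h1]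
      ext i
      rw [precond_apply, Matrix.mulVec_mulVec, Matrix.nonsing_inv_mul _ hdet, Matrix.one_mulVec,
        mul_div_cancel_left₀ _ (wt_pos hqd i).ne'])
  refine ⟨C * c, by positivity, r, hr, fun ε β hβ hs => ?_⟩
  have hcmp : C * (‖ε‖ + β) ≤ C * c * (enorm σ0 ε + β) := by
    rw [mul_assoc]
    refine mul_le_mul_of_nonneg_left ?_ hC.le
    nlinarith [hc ε]
  obtain ⟨e, hfix, huniq, hball, hle, hδC, hquad⟩ := hmain ε β hβ (hcmp.trans hs)
  have hzero : ∀ z, newtonMap (obs k x qd) (prow k x σ0 qd A) e₀ (precond qd A (rho0 d qd)) ε β z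
      = z ↔ Smap k x σ0 (qd, yd) ε β (param qd z) = 0 := by
    intro z
    rw [newtonMap, sub_eq_self, sum_smul_prow, ← map_smul, ← map_add, precond_eq_zero hqd hdet,
      Smap]
    simp only [obs, he₀]
  have hnorm : ∀ z, Wnorm qd (param qd z - (qd, yd)) = ‖z - e₀‖ := fun z => by
    rw [← he₀, ← param_sub, Wnorm_param hqd]
  have hδ : toParam (deltaHat k x σ0 qd yd ε β) = param qd
      (∑ j, ε j • prow k x σ0 qd A j e₀ - β • precond qd A (rho0 d qd)) := by
    rw [sum_smul_prow, he₀, ← map_smul, ← map_sub, param]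
    congr 1
    ext i
    rw [precond_apply, mul_div_cancel₀ _ (wt_pos hqd i).ne']
    rfl
  refine ⟨param qd e, ⟨?_, (hzero e).1 hfix⟩, fun m' hm' hS => ?_, ?_, ?_, ?_, ?_⟩
  · rw [hnorm]; linarith
  · obtain ⟨z, rfl⟩ := param_surjective hqd m'
    rw [hnorm] at hm'
    rw [huniq z hm' ((hzero z).2 hS)]
  · rwa [hnorm]
  · rwa [hnorm, hδ, Wnorm_param hqd]
  · rw [hδ, Wnorm_param hqd]; exact hδC.trans hcmp
  · rw [hδ, ← he₀, ← param_sub, ← param_sub, Wnorm_param hqd, ← mul_pow]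
    rw [← mul_pow] at hquad
    refine hquad.trans (pow_le_pow_left₀ (by positivity) hcmp 2)
end
end

section
/- Suppose k(x, ·) is three times continuously differentiable in y with finite bounds C_k, C'_k, C''_k, C'''_k, that G'(m†) has full column rank, and that for some θ ∈ (0,1] the vanishing-derivative pre-certificate η† := K* Σ₀^{-1} G'(m†) I₀^{-1}(ρ; 0) is θ-admissible for µ† with weights w_n = √|q_n†|. Then there exist constants C₁, C₂ > 0 and r̂ > 0 such that whenever ε ∈ ℝ^{N_o} and β > 0 satisfy C₁(‖ε‖_{Σ₀^{-1}} + β) ≤ √(θ/32) and C₂ β^{-1}((‖ε‖_{Σ₀^{-1}} + β)² + ‖ε‖_{Σ₀^{-1}}) ≤ θ²/32: the stationarity equation G'(m)ᵀ Σ₀^{-1}(G(m) − G(m†) − ε) + β(ρ; 0) = 0 has a unique solution m̂ = (q̂; ŷ) in {m : ‖m − m†‖_{W†} ≤ (3/2) r̂}, and the function η̂ := β^{-1} K* Σ₀^{-1}(G(m†) + ε − G(m̂)) is θ/2-admissible for µ̂ = Σ_{n=1}^{N_s} q̂_n δ_{ŷ_n} with weights w_n = √|q_n†|. -/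
/-!
The stationarity equation is a square system `S(ε, β, m) = 0` with `S(0, 0, m†) = 0`. At that point
the residual `G(m) - G(m†) - ε` vanishes, so the derivative of `G'(m)ᵀ` drops out and the partial
derivative in `m` is the Fisher matrix `I₀`, which is invertible because `G'(m†)` has full column
rank. The implicit function theorem (`exists_solution_branch`) yields a differentiable branch
`ψ(ε, β)` which is the only solution near `m†`; since `W†`-balls form a neighbourhood basis
(`exists_Wnorm_ball_subset`), this gives `r̂` together with existence and uniqueness.

Substitute `ε = β u`. The first-order expansion of `G ∘ ψ` (`tendsto_dual`) shows that
`β⁻¹ Σ₀⁻¹ (G(m†) + ε - G(m̂))` tends to `Σ₀⁻¹ G'(m†) I₀⁻¹ (ρ; 0)` as `(u, β) → (0, 0⁺)`; thus the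
coefficients of `η̂` in the functions `k(x_j, ·)` tend to those of `η†`. Moreover the stationarity
equation itself says that `η̂` equals `sign(q_n†)` and is critical at every `ŷ_n`
(`combo_of_Smap_eq_zero`).

It remains to see that admissibility survives small perturbations of this kind, at the price of
replacing `θ` by `θ / 2` (`eventually_admissible`). Near `y_n†` the admissibility bound forces the
Hessian of `sign(q_n†) η†` to be at most `-2 θ |q_n†|`; a nearby Hessian is at most `-θ |q_n†|`, and
integrating twice along the segment from the critical point `ŷ_n` gives the quadratic bound. Away
from the `y_n†` the bound for `θ` is strictly stronger than that for `θ / 2`, hence stable, and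
compactness of `Ω_s` makes the two regimes uniform.

All requirements on `(ε, β)` therefore hold once `β < δ` and `‖ε / β‖ < δ` for some `δ > 0`, and
`C₁, C₂` are chosen so that the two smallness conditions imply these bounds.
-/

open Matrix

noncomputable section

/-- `η` is `θ`-admissible for the sparse measure with coefficients `qc` and positions `yc`,
with squared weights `wsq`. -/
def Admissible {d Ns : ℕ} (Ωs : Set (EuclideanSpace ℝ (Fin d))) (wsq : Fin Ns → ℝ)
    (θ : ℝ) (qc : Fin Ns → ℝ) (yc : Fin Ns → EuclideanSpace ℝ (Fin d))
    (η : EuclideanSpace ℝ (Fin d) → ℝ) : Prop :=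
  (∀ n, η (yc n) = Real.sign (qc n)) ∧
    ∀ z ∈ Ωs, |η z| ≤ 1 - θ * min θ (⨅ n, wsq n * ‖z - yc n‖ ^ 2)

section Aux

open Filter Topology

/-! ### Second derivatives on the line -/

/-- Taylor's inequality at a critical point. -/
lemma le_sub_of_second_deriv_le {f f' f'' : ℝ → ℝ} {c : ℝ}
    (hf : ∀ t, HasDerivAt f (f' t) t) (hf' : ∀ t, HasDerivAt f' (f'' t) t)
    (h0 : f' 0 = 0) (h2 : ∀ t ∈ Set.Icc (0 : ℝ) 1, f'' t ≤ -(2 * c)) :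
    f 1 ≤ f 0 - c := by
  have h1 : ∀ t, HasDerivAt (fun t => f' t + 2 * c * t) (f'' t + 2 * c) t := fun t => by
    exact ((hf' t).fun_add ((hasDerivAt_id t).const_mul (2 * c))).congr_deriv (by simp)
  have hanti : AntitoneOn (fun t => f' t + 2 * c * t) (Set.Icc 0 1) := by
    refine antitoneOn_of_deriv_nonpos (convex_Icc 0 1)
      (fun t _ => (h1 t).continuousAt.continuousWithinAt)
      (fun t _ => (h1 t).differentiableAt.differentiableWithinAt) fun t ht => ?_
    rw [(h1 t).deriv]
    linarith [h2 t (interior_subset ht)]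
  have h3 : ∀ t, HasDerivAt (fun t => f t + c * t ^ 2) (f' t + 2 * c * t) t := fun t => by
    exact ((hf t).fun_add (((hasDerivAt_id t).fun_pow 2).const_mul c)).congr_deriv
      (by simp; ring)
  have hanti' : AntitoneOn (fun t => f t + c * t ^ 2) (Set.Icc 0 1) := by
    refine antitoneOn_of_deriv_nonpos (convex_Icc 0 1)
      (fun t _ => (h3 t).continuousAt.continuousWithinAt)
      (fun t _ => (h3 t).differentiableAt.differentiableWithinAt) fun t ht => ?_
    rw [(h3 t).deriv]
    have ht' := interior_subset ht
    simpa [h0] using hanti (Set.left_mem_Icc.2 zero_le_one) ht' ht'.1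
  have := hanti' (Set.left_mem_Icc.2 zero_le_one) (Set.right_mem_Icc.2 zero_le_one) zero_le_one
  norm_num at this
  linarith

/-- The second-order necessary condition, in quantitative form: a parabola lying above `f` and
touching it at `0` bounds the second derivative there. -/
lemma second_deriv_le_of_eventually_le {f f' : ℝ → ℝ} {b c : ℝ}
    (hf : ∀ t, HasDerivAt f (f' t) t) (hf' : HasDerivAt f' b 0)
    (hle : ∀ᶠ t in 𝓝 (0 : ℝ), f t ≤ f 0 - c * t ^ 2) : b ≤ -(2 * c) := by
  have h1 : ∀ t, HasDerivAt (fun t => f t + c * t ^ 2) (f' t + 2 * c * t) t := fun t => by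
    exact ((hf t).fun_add (((hasDerivAt_id t).fun_pow 2).const_mul c)).congr_deriv
      (by simp; ring)
  have h2 : HasDerivAt (fun t => f' t + 2 * c * t) (b + 2 * c) 0 := by
    exact (hf'.fun_add ((hasDerivAt_id (0 : ℝ)).const_mul (2 * c))).congr_deriv (by simp)
  have hd : deriv (fun t => f t + c * t ^ 2) = fun t => f' t + 2 * c * t :=
    funext fun t => (h1 t).deriv
  have hmax : IsLocalMax (fun t => f t + c * t ^ 2) 0 := by
    filter_upwards [hle] with t ht
    simp; linarith
  by_contra! hcon
  have hmin : IsLocalMin (fun t => f t + c * t ^ 2) 0 := by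
    refine isLocalMin_of_deriv_deriv_pos ?_ hmax.deriv_eq_zero (h1 0).continuousAt
    rw [hd, h2.deriv]; linarith
  have hconst : (fun t => f t + c * t ^ 2) =ᶠ[𝓝 0] fun _ => f 0 + c * 0 ^ 2 := by
    filter_upwards [hmax, hmin] with t ht ht' using le_antisymm ht ht'
  have hz : deriv (deriv fun t => f t + c * t ^ 2) 0 = 0 := by
    rw [hconst.deriv.deriv_eq]; simp
  rw [hd, h2.deriv] at hz
  linarith

/-! ### Linear combinations of kernel sections -/

section Combo

variable {d No : ℕ} (κ : Fin No → EuclideanSpace ℝ (Fin d) → ℝ)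

/-- The linear combination `Σ_j a_j κ_j` of kernel sections, i.e. `K* a`. -/
def combo (a : Fin No → ℝ) (z : EuclideanSpace ℝ (Fin d)) : ℝ := ∑ j, a j * κ j z

/-- The derivative of `combo κ a`. -/
def comboD (a : Fin No → ℝ) (z : EuclideanSpace ℝ (Fin d)) :
    EuclideanSpace ℝ (Fin d) →L[ℝ] ℝ := ∑ j, a j • fderiv ℝ (κ j) z

/-- The second derivative of `combo κ a`. -/
def comboH (a : Fin No → ℝ) (z : EuclideanSpace ℝ (Fin d)) :
    EuclideanSpace ℝ (Fin d) →L[ℝ] EuclideanSpace ℝ (Fin d) →L[ℝ] ℝ :=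
  ∑ j, a j • fderiv ℝ (fderiv ℝ (κ j)) z

variable {κ} (hκ : ∀ j, ContDiff ℝ 3 (κ j))
include hκ

lemma combo_hasFDerivAt (a : Fin No → ℝ) (z : EuclideanSpace ℝ (Fin d)) :
    HasFDerivAt (combo κ a) (comboD κ a z) z := by
  unfold combo comboD
  exact HasFDerivAt.fun_sum fun j _ =>
    (((hκ j).differentiable (by norm_num)) z).hasFDerivAt.const_mul (a j)

lemma comboD_hasFDerivAt (a : Fin No → ℝ) (z : EuclideanSpace ℝ (Fin d)) :
    HasFDerivAt (comboD κ a) (comboH κ a z) z := by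
  have h : ∀ j, ContDiff ℝ 2 (fderiv ℝ (κ j)) := fun j =>
    (hκ j).fderiv_right (by norm_num)
  unfold comboD comboH
  exact HasFDerivAt.fun_sum fun j _ =>
    (((h j).differentiable (by norm_num)) z).hasFDerivAt.const_smul (a j)

lemma continuous_combo : Continuous fun p : (Fin No → ℝ) × EuclideanSpace ℝ (Fin d) =>
    combo κ p.1 p.2 := by
  have h : ∀ j, Continuous (κ j) := fun j => (hκ j).continuous
  unfold combo
  fun_prop

lemma continuous_comboH : Continuous fun p : (Fin No → ℝ) × EuclideanSpace ℝ (Fin d) =>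
    comboH κ p.1 p.2 := by
  have h : ∀ j, Continuous (fderiv ℝ (fderiv ℝ (κ j))) := fun j =>
    ((hκ j).fderiv_right (m := 2) (by norm_num)).continuous_fderiv (by norm_num)
  unfold comboH
  have : IsTopologicalAddGroup (EuclideanSpace ℝ (Fin d) →L[ℝ]
    EuclideanSpace ℝ (Fin d) →L[ℝ] ℝ) := inferInstance
  have : ContinuousAdd (EuclideanSpace ℝ (Fin d) →L[ℝ]
    EuclideanSpace ℝ (Fin d) →L[ℝ] ℝ) := this.toContinuousAdd
  exact continuous_finsetSum _ fun j _ =>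
    ((continuous_apply j).comp continuous_fst).smul ((h j).comp continuous_snd)

lemma combo_line_hasDerivAt (a : Fin No → ℝ) (y v : EuclideanSpace ℝ (Fin d)) (t : ℝ) :
    HasDerivAt (fun t : ℝ => combo κ a (y + t • v)) (comboD κ a (y + t • v) v) t := by
  have hl : HasDerivAt (fun t : ℝ => y + t • v) v t := by
    simpa using ((hasDerivAt_id t).smul_const v).const_add y
  exact (combo_hasFDerivAt hκ a (y + t • v)).comp_hasDerivAt t hl

lemma comboD_line_hasDerivAt (a : Fin No → ℝ) (y v : EuclideanSpace ℝ (Fin d)) (t : ℝ) :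
    HasDerivAt (fun t : ℝ => comboD κ a (y + t • v) v) (comboH κ a (y + t • v) v v) t := by
  have hl : HasDerivAt (fun t : ℝ => y + t • v) v t := by
    simpa using ((hasDerivAt_id t).smul_const v).const_add y
  have h := (comboD_hasFDerivAt hκ a (y + t • v)).comp_hasDerivAt t hl
  simpa using h.clm_apply (hasDerivAt_const t v)

end Combo

/-! ### Stability of admissibility -/

section Stability

lemma norm_sub_lt_of_tendsto {α G : Type*} [SeminormedAddCommGroup G] {f : α → G} {l : Filter α}
    {b : G} (h : Tendsto f l (𝓝 b)) {c : ℝ} (hc : 0 < c) : ∀ᶠ p in l, ‖f p - b‖ < c := by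
  filter_upwards [h (Metric.ball_mem_nhds _ hc)] with p hp
  exact mem_ball_iff_norm.1 hp

variable {d No Ns : ℕ} {κ : Fin No → EuclideanSpace ℝ (Fin d) → ℝ}

/-- A quadratic upper bound around an interpolation point controls the Hessian there. -/
lemma comboH_le_of_eventually_le (hκ : ∀ j, ContDiff ℝ 3 (κ j)) {a : Fin No → ℝ}
    {y : EuclideanSpace ℝ (Fin d)} {s c : ℝ}
    (hy : s * combo κ a y = 1)
    (hle : ∀ᶠ z in 𝓝 y, s * combo κ a z ≤ 1 - c * ‖z - y‖ ^ 2)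
    (v : EuclideanSpace ℝ (Fin d)) :
    s * comboH κ a y v v ≤ -(2 * (c * ‖v‖ ^ 2)) := by
  have hH := (comboD_line_hasDerivAt hκ a y v 0).const_mul s
  simp only [zero_smul, add_zero] at hH
  refine second_deriv_le_of_eventually_le (f := fun t : ℝ => s * combo κ a (y + t • v))
    (fun t => (combo_line_hasDerivAt hκ a y v t).const_mul s) hH ?_
  have hl : Tendsto (fun t : ℝ => y + t • v) (𝓝 0) (𝓝 y) := by
    have : Continuous fun t : ℝ => y + t • v := by fun_prop
    simpa using this.tendsto 0
  filter_upwards [hl.eventually hle] with t ht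
  simp only [zero_smul, add_zero, hy]
  refine ht.trans_eq ?_
  rw [add_sub_cancel_left, norm_smul, mul_pow, Real.norm_eq_abs, sq_abs]
  ring

/-- Near a support point the nondegenerate Hessian, stable under small perturbations, forces the
quadratic bound with half the constant around the perturbed critical point. -/
lemma eventually_near (hκ : ∀ j, ContDiff ℝ 3 (κ j)) {ad : Fin No → ℝ}
    {yd : EuclideanSpace ℝ (Fin d)} {s c : ℝ} (hs : s * s = 1) (hc : 0 < c)
    (hy : s * combo κ ad yd = 1)
    (hle : ∀ᶠ z in 𝓝 yd, s * combo κ ad z ≤ 1 - c * ‖z - yd‖ ^ 2) :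
    ∀ᶠ p : ((Fin No → ℝ) × EuclideanSpace ℝ (Fin d)) × EuclideanSpace ℝ (Fin d) in
      𝓝 ((ad, yd), yd), combo κ p.1.1 p.1.2 = s → comboD κ p.1.1 p.1.2 = 0 →
        |combo κ p.1.1 p.2| ≤ 1 - c / 2 * ‖p.2 - p.1.2‖ ^ 2 := by
  have habs : |s| = 1 := by
    rcases mul_self_eq_one_iff.1 hs with h | h <;> simp [h]
  have hH : ∀ᶠ p : (Fin No → ℝ) × EuclideanSpace ℝ (Fin d) in 𝓝 (ad, yd),
      ‖comboH κ p.1 p.2 - comboH κ ad yd‖ < c := by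
    have h := (continuous_comboH hκ).tendsto (ad, yd)
    exact norm_sub_lt_of_tendsto (G := EuclideanSpace ℝ (Fin d) →L[ℝ]
      EuclideanSpace ℝ (Fin d) →L[ℝ] ℝ) (b := comboH κ ad yd) h hc
  have hpos : ∀ᶠ p : (Fin No → ℝ) × EuclideanSpace ℝ (Fin d) in 𝓝 (ad, yd),
      0 < s * combo κ p.1 p.2 := by
    have h : Continuous fun p : (Fin No → ℝ) × EuclideanSpace ℝ (Fin d) =>
      s * combo κ p.1 p.2 := continuous_const.mul (continuous_combo hκ)
    exact h.continuousAt.eventually (lt_mem_nhds (by simp only [hy]; norm_num))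
  obtain ⟨r, hr, hball⟩ := Metric.eventually_nhds_iff_ball.1 (hH.and hpos)
  have hnb : ∀ᶠ p : ((Fin No → ℝ) × EuclideanSpace ℝ (Fin d)) × EuclideanSpace ℝ (Fin d) in
      𝓝 ((ad, yd), yd),
        (p.1.1 ∈ Metric.ball ad r ∧ p.1.2 ∈ Metric.ball yd r) ∧ p.2 ∈ Metric.ball yd r := by
    exact prod_mem_nhds (prod_mem_nhds (Metric.ball_mem_nhds ad hr)
      (Metric.ball_mem_nhds yd hr)) (Metric.ball_mem_nhds yd hr)
  filter_upwards [hnb]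
  rintro ⟨⟨a, y⟩, z⟩ ⟨⟨ha, hy'⟩, hz⟩ h1 h2
  simp only at ha hy' hz h1 h2 ⊢
  have hin : ∀ ξ ∈ Metric.ball yd r, (a, ξ) ∈ Metric.ball (ad, yd) r := fun ξ hξ => by
    rw [← ball_prod_same]; exact ⟨ha, hξ⟩
  set v := z - y with hv
  have hbound := le_sub_of_second_deriv_le (c := c / 2 * ‖v‖ ^ 2)
    (fun t => (combo_line_hasDerivAt hκ a y v t).const_mul s)
    (fun t => (comboD_line_hasDerivAt hκ a y v t).const_mul s)
    (by simp [h2]) (fun t ht => by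
      have hξ : y + t • v ∈ Metric.ball yd r :=
        (convex_ball yd r).add_smul_sub_mem hy' hz ht
      have hd := (hball _ (hin _ hξ)).1
      simp only at hd
      have h0 := comboH_le_of_eventually_le hκ hy hle v
      have h3 : s * (comboH κ a (y + t • v) - comboH κ ad yd) v v ≤ c * ‖v‖ ^ 2 := by
        refine (le_abs_self _).trans ?_
        rw [abs_mul, habs, one_mul, ← Real.norm_eq_abs]
        refine (ContinuousLinearMap.le_opNorm₂ _ v v).trans ?_
        rw [mul_assoc, ← sq]
        exact mul_le_mul_of_nonneg_right hd.le (sq_nonneg _)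
      simp only [_root_.sub_apply] at h3
      linarith)
  simp only [zero_smul, add_zero, one_smul, h1, hs] at hbound
  rw [hv, add_sub_cancel] at hbound
  have hp := (hball _ (hin _ hz)).2
  simp only at hp
  calc |combo κ a z| = s * combo κ a z := by
        rw [← abs_of_pos hp, abs_mul, habs, one_mul]
    _ ≤ _ := hbound

/-- Stability of admissibility: an admissible `Σ_j a†_j κ_j` stays admissible with half the
constant under small perturbations of coefficients and positions, as long as the perturbed
function interpolates the signs and is critical at the perturbed positions. -/
lemma eventually_admissible (hκ : ∀ j, ContDiff ℝ 3 (κ j)) (hNs : 0 < Ns)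
    {Ωs : Set (EuclideanSpace ℝ (Fin d))} (hΩ : IsCompact Ωs)
    {ad : Fin No → ℝ} {qd : Fin Ns → ℝ} (hqd : ∀ n, qd n ≠ 0)
    {yd : Fin Ns → EuclideanSpace ℝ (Fin d)} (hyd : ∀ n, yd n ∈ interior Ωs)
    (hinj : Function.Injective yd)
    {θ : ℝ} (hθ : 0 < θ) (hadm : Admissible Ωs (fun n => |qd n|) θ qd yd (combo κ ad)) :
    ∀ᶠ p : (Fin No → ℝ) × (Fin Ns → EuclideanSpace ℝ (Fin d)) in 𝓝 (ad, yd),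
      (∀ n, combo κ p.1 (p.2 n) = Real.sign (qd n)) → (∀ n, comboD κ p.1 (p.2 n) = 0) →
      ∀ z ∈ Ωs, |combo κ p.1 z| ≤
        1 - θ / 2 * min (θ / 2) (⨅ n, |qd n| * ‖z - p.2 n‖ ^ 2) := by
  have : Nonempty (Fin Ns) := ⟨⟨0, hNs⟩⟩
  have hinf : ∀ (y : Fin Ns → EuclideanSpace ℝ (Fin d)) (z : EuclideanSpace ℝ (Fin d)) n,
      ⨅ n, |qd n| * ‖z - y n‖ ^ 2 ≤ |qd n| * ‖z - y n‖ ^ 2 := fun y z n =>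
    ciInf_le (Set.finite_range _).bddBelow n
  have key : ∀ z₀ ∈ Ωs, ∀ᶠ p : ((Fin No → ℝ) × (Fin Ns → EuclideanSpace ℝ (Fin d))) ×
      EuclideanSpace ℝ (Fin d) in 𝓝 ((ad, yd), z₀),
      (∀ n, combo κ p.1.1 (p.1.2 n) = Real.sign (qd n)) →
      (∀ n, comboD κ p.1.1 (p.1.2 n) = 0) → |combo κ p.1.1 p.2| ≤
        1 - θ / 2 * min (θ / 2) (⨅ n, |qd n| * ‖p.2 - p.1.2 n‖ ^ 2) := by
    intro z₀ hz₀
    by_cases hcase : ∃ n, z₀ = yd n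
    · obtain ⟨n, rfl⟩ := hcase
      have hc : 0 < θ * |qd n| := mul_pos hθ (abs_pos.2 (hqd n))
      have hs : Real.sign (qd n) * Real.sign (qd n) = 1 := by
        rcases Real.sign_apply_eq_of_ne_zero _ (hqd n) with h | h <;> simp [h]
      have habs : |Real.sign (qd n)| = 1 := by
        rcases Real.sign_apply_eq_of_ne_zero _ (hqd n) with h | h <;> simp [h]
      have hle : ∀ᶠ z in 𝓝 (yd n), Real.sign (qd n) * combo κ ad z ≤
          1 - θ * |qd n| * ‖z - yd n‖ ^ 2 := by
        -- close to `yd n` the minimum in the admissibility bound is the `n`-th quadratic term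
        have hmin : ∀ᶠ z in 𝓝 (yd n), ∀ m,
            |qd n| * ‖z - yd n‖ ^ 2 ≤ |qd m| * ‖z - yd m‖ ^ 2 := by
          refine eventually_all.2 fun m => ?_
          by_cases hm : m = n
          · simp [hm]
          · have h0 : |qd n| * ‖yd n - yd n‖ ^ 2 < |qd m| * ‖yd n - yd m‖ ^ 2 := by
              have h1 : 0 < ‖yd n - yd m‖ :=
                norm_pos_iff.2 (sub_ne_zero.2 fun h => hm (hinj h).symm)
              have := abs_pos.2 (hqd m)
              simp only [sub_self, norm_zero]
              norm_num
              positivity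
            have hc1 : Continuous fun z => |qd n| * ‖z - yd n‖ ^ 2 := by fun_prop
            have hc2 : Continuous fun z => |qd m| * ‖z - yd m‖ ^ 2 := by fun_prop
            exact (hc1.continuousAt.eventually_lt hc2.continuousAt h0).mono fun z hz => hz.le
        have hsmall : ∀ᶠ z in 𝓝 (yd n), |qd n| * ‖z - yd n‖ ^ 2 < θ := by
          have hc1 : Continuous fun z => |qd n| * ‖z - yd n‖ ^ 2 := by fun_prop
          exact hc1.continuousAt.eventually (gt_mem_nhds (by simpa using hθ))
        filter_upwards [hmin, hsmall, mem_interior_iff_mem_nhds.1 (hyd n)] with z h1 h2 h3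
        have h4 : |qd n| * ‖z - yd n‖ ^ 2 ≤ ⨅ m, |qd m| * ‖z - yd m‖ ^ 2 := le_ciInf h1
        have h5 := hadm.2 z h3
        have h6 := mul_le_mul_of_nonneg_left (le_min h2.le h4) hθ.le
        have h7 : Real.sign (qd n) * combo κ ad z ≤ |combo κ ad z| := by
          refine (le_abs_self _).trans_eq ?_
          rw [abs_mul, habs, one_mul]
        nlinarith
      have hnear := eventually_near hκ hs hc (by rw [hadm.1 n, hs]) hle
      have hcont : Continuous fun p : ((Fin No → ℝ) × (Fin Ns → EuclideanSpace ℝ (Fin d))) ×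
          EuclideanSpace ℝ (Fin d) => ((p.1.1, p.1.2 n), p.2) := by fun_prop
      filter_upwards [hcont.continuousAt.eventually hnear] with p hp h1 h2
      refine (hp (h1 n) (h2 n)).trans ?_
      have h3 := mul_le_mul_of_nonneg_left
        ((min_le_right (θ / 2) _).trans (hinf p.1.2 p.2 n)) (half_pos hθ).le
      linarith
    · push Not at hcase
      -- off the support, the bound for `θ` is strictly stronger than the one for `θ / 2`
      obtain ⟨n₀, hn₀⟩ := exists_eq_ciInf_of_finite (f := fun n => |qd n| * ‖z₀ - yd n‖ ^ 2)
      have hpos : 0 < |qd n₀| * ‖z₀ - yd n₀‖ ^ 2 := by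
        have h1 := abs_pos.2 (hqd n₀)
        have h2 : 0 < ‖z₀ - yd n₀‖ := norm_pos_iff.2 (sub_ne_zero.2 (hcase n₀))
        positivity
      have hlt : |combo κ ad z₀| <
          1 - θ / 2 * min (θ / 2) (|qd n₀| * ‖z₀ - yd n₀‖ ^ 2) := by
        have h1 := hadm.2 z₀ hz₀
        rw [← hn₀] at h1
        have h2 : min (θ / 2) (|qd n₀| * ‖z₀ - yd n₀‖ ^ 2) ≤
            min θ (|qd n₀| * ‖z₀ - yd n₀‖ ^ 2) := min_le_min_right _ (by linarith)
        have h3 : 0 < min θ (|qd n₀| * ‖z₀ - yd n₀‖ ^ 2) := lt_min hθ hpos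
        have := mul_le_mul_of_nonneg_left h2 (half_pos hθ).le
        nlinarith [mul_pos hθ h3]
      have hc1 : Continuous fun p : ((Fin No → ℝ) × (Fin Ns → EuclideanSpace ℝ (Fin d))) ×
          EuclideanSpace ℝ (Fin d) => |combo κ p.1.1 p.2| :=
        ((continuous_combo hκ).comp
          ((continuous_fst.comp continuous_fst).prodMk continuous_snd)).abs
      have hc2 : Continuous fun p : ((Fin No → ℝ) × (Fin Ns → EuclideanSpace ℝ (Fin d))) ×
          EuclideanSpace ℝ (Fin d) =>
          1 - θ / 2 * min (θ / 2) (|qd n₀| * ‖p.2 - p.1.2 n₀‖ ^ 2) := by fun_prop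
      filter_upwards [hc1.continuousAt.eventually_lt hc2.continuousAt hlt] with p hp _ _
      have h3 := mul_le_mul_of_nonneg_left
        (min_le_min_left (θ / 2) (hinf p.1.2 p.2 n₀)) (half_pos hθ).le
      linarith
  have hall := hΩ.eventually_forall_of_forall_eventually (x₀ := (ad, yd))
    (P := fun p z => (∀ n, combo κ p.1 (p.2 n) = Real.sign (qd n)) →
      (∀ n, comboD κ p.1 (p.2 n) = 0) → |combo κ p.1 z| ≤
        1 - θ / 2 * min (θ / 2) (⨅ n, |qd n| * ‖z - p.2 n‖ ^ 2)) key
  filter_upwards [hall] with p hp h1 h2 z hz using hp z hz h1 h2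

end Stability

/-! ### The linearized stationarity equation -/

section Perturbation

variable {d dO No Ns : ℕ}
  {k : EuclideanSpace ℝ (Fin dO) → EuclideanSpace ℝ (Fin d) → ℝ}
  {x : Fin No → EuclideanSpace ℝ (Fin dO)}

/-- Coordinates of a parameter perturbation `(δq; δy)`; inverse to `toParam`. -/
def toCoord (δ : (Fin Ns → ℝ) × (Fin Ns → EuclideanSpace ℝ (Fin d))) :
    (Fin Ns ⊕ Fin Ns × Fin d) → ℝ :=
  Sum.elim δ.1 fun p => δ.2 p.1 p.2

lemma toCoord_toParam (v : (Fin Ns ⊕ Fin Ns × Fin d) → ℝ) : toCoord (toParam v) = v := by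
  ext i
  rcases i with i | i <;> simp [toCoord, toParam]

lemma toCoord_injective : Function.Injective (toCoord (d := d) (Ns := Ns)) := by
  intro a b h
  refine Prod.ext (funext fun n => congrFun h (Sum.inl n)) (funext fun n => ?_)
  ext i
  exact congrFun h (Sum.inr (n, i))

lemma clm_eq_sum (L : EuclideanSpace ℝ (Fin d) →L[ℝ] ℝ) (v : EuclideanSpace ℝ (Fin d)) :
    L v = ∑ i, L (EuclideanSpace.single i 1) * v i := by
  conv_lhs => rw [← (EuclideanSpace.basisFun (Fin d) ℝ).sum_repr v]
  simp [mul_comm]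

/-- `Jmat` is indeed the Jacobian of `Gfun`. -/
lemma Gfun_hasFDerivAt (hk : ∀ x, ContDiff ℝ 3 (k x)) (q : Fin Ns → ℝ)
    (y : Fin Ns → EuclideanSpace ℝ (Fin d)) (j : Fin No) :
    ∃ L : ((Fin Ns → ℝ) × (Fin Ns → EuclideanSpace ℝ (Fin d))) →L[ℝ] ℝ,
      HasFDerivAt (fun m => Gfun k x m j) L (q, y) ∧
        ∀ δ, L δ = (Jmat k x q y *ᵥ toCoord δ) j := by
  have hq : ∀ n, HasFDerivAt (fun m : (Fin Ns → ℝ) × (Fin Ns → EuclideanSpace ℝ (Fin d)) => m.1 n)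
      ((ContinuousLinearMap.proj (R := ℝ) (φ := fun _ : Fin Ns => ℝ) n).comp
        (ContinuousLinearMap.fst ℝ _ _)) (q, y) := fun n =>
    ((ContinuousLinearMap.proj (R := ℝ) (φ := fun _ : Fin Ns => ℝ) n).comp
      (ContinuousLinearMap.fst ℝ (Fin Ns → ℝ)
        (Fin Ns → EuclideanSpace ℝ (Fin d)))).hasFDerivAt
  have hy : ∀ n, HasFDerivAt (fun m : (Fin Ns → ℝ) × (Fin Ns → EuclideanSpace ℝ (Fin d)) => m.2 n)
      ((ContinuousLinearMap.proj (R := ℝ) (φ := fun _ : Fin Ns => EuclideanSpace ℝ (Fin d)) n).comp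
        (ContinuousLinearMap.snd ℝ _ _)) (q, y) := fun n =>
    ((ContinuousLinearMap.proj (R := ℝ) (φ := fun _ : Fin Ns => EuclideanSpace ℝ (Fin d)) n).comp
      (ContinuousLinearMap.snd ℝ (Fin Ns → ℝ)
        (Fin Ns → EuclideanSpace ℝ (Fin d)))).hasFDerivAt
  have hkn : ∀ n, HasFDerivAt (k (x j)) (fderiv ℝ (k (x j)) (y n)) (y n) := fun n =>
    ((hk (x j)).differentiable (by norm_num) _).hasFDerivAt
  refine ⟨_, HasFDerivAt.fun_sum fun n _ =>
    (hq n).mul ((hkn n).comp (q, y) (hy n)), fun δ => ?_⟩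
  simp only [Matrix.mulVec, dotProduct, Fintype.sum_sum_type, Fintype.sum_prod_type, Jmat,
    Matrix.of_apply, Sum.elim_inl, Sum.elim_inr, toCoord]
  rw [← Finset.sum_add_distrib, _root_.sum_apply]
  refine Finset.sum_congr rfl fun n _ => ?_
  simp only [_root_.add_apply, _root_.smul_apply,
    ContinuousLinearMap.comp_apply, ContinuousLinearMap.coe_fst', ContinuousLinearMap.coe_snd',
    ContinuousLinearMap.proj_apply, smul_eq_mul]
  rw [clm_eq_sum _ (δ.2 n), Finset.mul_sum, add_comm]
  simp only [mul_assoc]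

lemma Gfun_contDiff (hk : ∀ x, ContDiff ℝ 3 (k x)) (j : Fin No) :
    ContDiff ℝ 1 fun m : (Fin Ns → ℝ) × (Fin Ns → EuclideanSpace ℝ (Fin d)) => Gfun k x m j := by
  have h : ContDiff ℝ 1 (k (x j)) := (hk (x j)).of_le (by norm_num)
  unfold Gfun
  fun_prop

lemma Jmat_contDiff (hk : ∀ x, ContDiff ℝ 3 (k x)) (j : Fin No) (l : Fin Ns ⊕ Fin Ns × Fin d) :
    ContDiff ℝ 1 fun m : (Fin Ns → ℝ) × (Fin Ns → EuclideanSpace ℝ (Fin d)) =>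
      Jmat k x m.1 m.2 j l := by
  have h : ContDiff ℝ 1 (k (x j)) := (hk (x j)).of_le (by norm_num)
  have h' : ContDiff ℝ 1 (fderiv ℝ (k (x j))) := (hk (x j)).fderiv_right (by norm_num)
  rcases l with n | ⟨n, i⟩
  · simp only [Jmat, Matrix.of_apply, Sum.elim_inl]
    fun_prop
  · simp only [Jmat, Matrix.of_apply, Sum.elim_inr]
    fun_prop

lemma Smap_apply (σ0 : Fin No → ℝ) (md : (Fin Ns → ℝ) × (Fin Ns → EuclideanSpace ℝ (Fin d)))
    (ε : Fin No → ℝ) (β : ℝ) (m) (l) :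
    Smap k x σ0 md ε β m l =
      ∑ j, Jmat k x m.1 m.2 j l * ((Gfun k x m j - Gfun k x md j - ε j) / σ0 j) +
        β * rho0 d md.1 l := by
  simp [Smap, Matrix.mulVec, dotProduct]

lemma Smap_contDiff (hk : ∀ x, ContDiff ℝ 3 (k x)) (σ0 : Fin No → ℝ)
    (md : (Fin Ns → ℝ) × (Fin Ns → EuclideanSpace ℝ (Fin d))) :
    ContDiff ℝ 1 fun u : ((Fin No → ℝ) × ℝ) ×
      ((Fin Ns → ℝ) × (Fin Ns → EuclideanSpace ℝ (Fin d))) =>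
        Smap k x σ0 md u.1.1 u.1.2 u.2 := by
  refine contDiff_pi.2 fun l => ?_
  simp only [Smap_apply]
  have h1 : ∀ j, ContDiff ℝ 1 fun u : ((Fin No → ℝ) × ℝ) ×
      ((Fin Ns → ℝ) × (Fin Ns → EuclideanSpace ℝ (Fin d))) => Gfun k x u.2 j := fun j =>
    (Gfun_contDiff hk j).comp contDiff_snd
  have h2 : ∀ j, ContDiff ℝ 1 fun u : ((Fin No → ℝ) × ℝ) ×
      ((Fin Ns → ℝ) × (Fin Ns → EuclideanSpace ℝ (Fin d))) => Jmat k x u.2.1 u.2.2 j l :=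
    fun j => (Jmat_contDiff hk j l).comp contDiff_snd
  have h3 : ∀ j, ContDiff ℝ 1 fun u : ((Fin No → ℝ) × ℝ) ×
      ((Fin Ns → ℝ) × (Fin Ns → EuclideanSpace ℝ (Fin d))) => u.1.1 j := fun j => by fun_prop
  refine ContDiff.add (ContDiff.sum fun j _ => (h2 j).mul ?_) (by fun_prop)
  exact (((h1 j).sub contDiff_const).sub (h3 j)).div_const _

/-- At the noiseless point the residual `G(m) - G(m†) - ε` vanishes, so the derivative of the
Jacobian does not contribute to the linearized stationarity map. -/
lemma Smap_fderiv_apply (hk : ∀ x, ContDiff ℝ 3 (k x)) (σ0 : Fin No → ℝ) (qd : Fin Ns → ℝ)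
    (yd : Fin Ns → EuclideanSpace ℝ (Fin d)) (δp : (Fin No → ℝ) × ℝ)
    (δ : (Fin Ns → ℝ) × (Fin Ns → EuclideanSpace ℝ (Fin d))) (l : Fin Ns ⊕ Fin Ns × Fin d) :
    fderiv ℝ (fun u : ((Fin No → ℝ) × ℝ) ×
      ((Fin Ns → ℝ) × (Fin Ns → EuclideanSpace ℝ (Fin d))) =>
        Smap k x σ0 (qd, yd) u.1.1 u.1.2 u.2) (0, (qd, yd)) (δp, δ) l =
      ∑ j, Jmat k x qd yd j l * (((Jmat k x qd yd *ᵥ toCoord δ) j - δp.1 j) / σ0 j) +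
        δp.2 * rho0 d qd l := by
  have hS := ((Smap_contDiff (x := x) hk σ0 (qd, yd)).differentiable (by norm_num)
    (0, (qd, yd))).hasFDerivAt
  have hSl := (hasFDerivAt_pi'.1 hS) l
  choose L hL hLapp using Gfun_hasFDerivAt (x := x) hk qd yd
  have hG : ∀ j, HasFDerivAt (fun u : ((Fin No → ℝ) × ℝ) ×
      ((Fin Ns → ℝ) × (Fin Ns → EuclideanSpace ℝ (Fin d))) => Gfun k x u.2 j)
      ((L j).comp (ContinuousLinearMap.snd ℝ _ _)) (0, (qd, yd)) := fun j =>
    HasFDerivAt.comp (g := fun m => Gfun k x m j) _ (hL j) hasFDerivAt_snd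
  have hJ : ∀ j, HasFDerivAt (fun u : ((Fin No → ℝ) × ℝ) ×
      ((Fin Ns → ℝ) × (Fin Ns → EuclideanSpace ℝ (Fin d))) => Jmat k x u.2.1 u.2.2 j l)
      (fderiv ℝ _ (0, (qd, yd))) (0, (qd, yd)) := fun j =>
    ((((Jmat_contDiff hk j l).comp contDiff_snd).differentiable (by norm_num))
      _).hasFDerivAt
  have hε : ∀ j, HasFDerivAt (fun u : ((Fin No → ℝ) × ℝ) ×
      ((Fin Ns → ℝ) × (Fin Ns → EuclideanSpace ℝ (Fin d))) => u.1.1 j)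
      ((ContinuousLinearMap.proj (R := ℝ) (φ := fun _ : Fin No => ℝ) j).comp
        ((ContinuousLinearMap.fst ℝ _ _).comp (ContinuousLinearMap.fst ℝ _ _)))
      (0, (qd, yd)) := fun j =>
    ((ContinuousLinearMap.proj (R := ℝ) (φ := fun _ : Fin No => ℝ) j).comp
      ((ContinuousLinearMap.fst ℝ (Fin No → ℝ) ℝ).comp
        (ContinuousLinearMap.fst ℝ ((Fin No → ℝ) × ℝ)
          ((Fin Ns → ℝ) × (Fin Ns → EuclideanSpace ℝ (Fin d)))))).hasFDerivAt
  have hβ : HasFDerivAt (fun u : ((Fin No → ℝ) × ℝ) ×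
      ((Fin Ns → ℝ) × (Fin Ns → EuclideanSpace ℝ (Fin d))) => u.1.2)
      ((ContinuousLinearMap.snd ℝ _ _).comp (ContinuousLinearMap.fst ℝ _ _))
      (0, (qd, yd)) :=
    ((ContinuousLinearMap.snd ℝ (Fin No → ℝ) ℝ).comp
      (ContinuousLinearMap.fst ℝ ((Fin No → ℝ) × ℝ)
        ((Fin Ns → ℝ) × (Fin Ns → EuclideanSpace ℝ (Fin d))))).hasFDerivAt
  have hmain := (HasFDerivAt.fun_sum (u := Finset.univ) fun j _ => (hJ j).mul
    ((((hG j).sub_const (Gfun k x (qd, yd) j)).sub (hε j)).mul_const (σ0 j)⁻¹)).add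
      (hβ.mul_const (rho0 d qd l))
  have heq := hSl.unique (hmain.congr_of_eventuallyEq (Eventually.of_forall fun u => by
    simp [Smap_apply, div_eq_mul_inv]))
  have := congrArg (fun T => T (δp, δ)) heq
  simpa [hLapp, div_eq_mul_inv, mul_comm, mul_left_comm, mul_assoc] using this

lemma Fisher_mulVec (σ0 : Fin No → ℝ) (qd : Fin Ns → ℝ)
    (yd : Fin Ns → EuclideanSpace ℝ (Fin d)) (v) (l) :
    (Fisher k x σ0 qd yd *ᵥ v) l =
      ∑ j, Jmat k x qd yd j l * ((Jmat k x qd yd *ᵥ v) j / σ0 j) := by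
  rw [Fisher, ← Matrix.mulVec_mulVec, ← Matrix.mulVec_mulVec]
  rw [Matrix.mulVec, dotProduct]
  refine Finset.sum_congr rfl fun j _ => ?_
  rw [Matrix.mulVec_diagonal, Matrix.transpose_apply, div_eq_inv_mul]

lemma Fisher_isUnit {σ0 : Fin No → ℝ} (hσ0 : ∀ j, 0 < σ0 j) {qd : Fin Ns → ℝ}
    {yd : Fin Ns → EuclideanSpace ℝ (Fin d)}
    (hrank : Function.Injective (Jmat k x qd yd).mulVec) : IsUnit (Fisher k x σ0 qd yd) := by
  rw [← Matrix.mulVec_injective_iff_isUnit]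
  refine (injective_iff_map_eq_zero (Matrix.mulVecLin (Fisher k x σ0 qd yd))).2 fun v hv => ?_
  rw [Matrix.mulVecLin_apply] at hv
  have hsum : ∑ j, (Jmat k x qd yd *ᵥ v) j ^ 2 / σ0 j = 0 := by
    have h0 : ∑ l, v l * (Fisher k x σ0 qd yd *ᵥ v) l = 0 := by simp [hv]
    rw [← h0]
    simp only [Fisher_mulVec, Finset.mul_sum]
    rw [Finset.sum_comm]
    refine Finset.sum_congr rfl fun j _ => ?_
    rw [sq, mul_div_assoc]
    conv_lhs => enter [1]; rw [Matrix.mulVec, dotProduct]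
    rw [Finset.sum_mul]
    exact Finset.sum_congr rfl fun l _ => by ring
  have hz : Jmat k x qd yd *ᵥ v = 0 := by
    funext j
    have := (Finset.sum_eq_zero_iff_of_nonneg
      (fun j _ => div_nonneg (sq_nonneg _) (hσ0 j).le)).1 hsum j (Finset.mem_univ j)
    rcases div_eq_zero_iff.1 this with h | h
    · simpa using h
    · exact absurd h (hσ0 j).ne'
  exact hrank (by simp [hz])

end Perturbation

/-! ### The solution branch and its dual variable -/

section Branch

variable {d dO No Ns : ℕ}
  {k : EuclideanSpace ℝ (Fin dO) → EuclideanSpace ℝ (Fin d) → ℝ}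
  {x : Fin No → EuclideanSpace ℝ (Fin dO)}

/-- The implicit function theorem applied to the stationarity equation at `(ε, β, m) = (0, 0, m†)`:
a solution branch `ψ`, unique near `m†`, with `∂ψ/∂β = -I₀⁻¹(ρ; 0)` at the origin. -/
lemma exists_solution_branch (hk : ∀ x, ContDiff ℝ 3 (k x)) {σ0 : Fin No → ℝ}
    (hσ0 : ∀ j, 0 < σ0 j) {qd : Fin Ns → ℝ} {yd : Fin Ns → EuclideanSpace ℝ (Fin d)}
    (hrank : Function.Injective (Jmat k x qd yd).mulVec) :
    ∃ (ψ : (Fin No → ℝ) × ℝ → (Fin Ns → ℝ) × (Fin Ns → EuclideanSpace ℝ (Fin d)))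
      (ψ' : ((Fin No → ℝ) × ℝ) →L[ℝ] (Fin Ns → ℝ) × (Fin Ns → EuclideanSpace ℝ (Fin d))),
      HasFDerivAt ψ ψ' 0 ∧ ψ 0 = (qd, yd) ∧
      (∀ᶠ v : ((Fin No → ℝ) × ℝ) × ((Fin Ns → ℝ) × (Fin Ns → EuclideanSpace ℝ (Fin d))) in
        𝓝 (0, (qd, yd)), Smap k x σ0 (qd, yd) v.1.1 v.1.2 v.2 = 0 ↔ ψ v.1 = v.2) ∧
      toCoord (ψ' (0, 1)) = -((Fisher k x σ0 qd yd)⁻¹ *ᵥ rho0 d qd) := by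
  set F := fun u : ((Fin No → ℝ) × ℝ) × ((Fin Ns → ℝ) × (Fin Ns → EuclideanSpace ℝ (Fin d))) =>
    Smap k x σ0 (qd, yd) u.1.1 u.1.2 u.2 with hF
  have hunit := Fisher_isUnit hσ0 hrank
  have hdet : IsUnit (Fisher k x σ0 qd yd).det := (Matrix.isUnit_iff_isUnit_det _).1 hunit
  have hF0 : F (0, (qd, yd)) = 0 := by
    funext l
    simp [hF, Smap_apply]
  have hstrict : HasStrictFDerivAt F (fderiv ℝ F (0, (qd, yd))) (0, (qd, yd)) :=
    (Smap_contDiff hk σ0 (qd, yd)).contDiffAt.hasStrictFDerivAt (by norm_num)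
  have hB : ∀ δ, (fderiv ℝ F (0, (qd, yd)) ∘L .inr ℝ _ _) δ =
      Fisher k x σ0 qd yd *ᵥ toCoord δ := fun δ => by
    funext l
    rw [ContinuousLinearMap.comp_apply, ContinuousLinearMap.inr_apply, Smap_fderiv_apply hk,
      Fisher_mulVec]
    simp
  have hA : (fderiv ℝ F (0, (qd, yd)) ∘L .inl ℝ _ _) (0, 1) = rho0 d qd := by
    funext l
    rw [ContinuousLinearMap.comp_apply, ContinuousLinearMap.inl_apply, Smap_fderiv_apply hk]
    have h0 : toCoord (0 : (Fin Ns → ℝ) × (Fin Ns → EuclideanSpace ℝ (Fin d))) = 0 := by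
      funext l; rcases l with l | l <;> simp [toCoord]
    simp [h0]
  have hinv : (fderiv ℝ F (0, (qd, yd)) ∘L .inr ℝ _ _).IsInvertible := by
    refine ⟨ContinuousLinearEquiv.ofBijective _ (LinearMap.ker_eq_bot.2 ?_)
      (LinearMap.range_eq_top.2 ?_), ContinuousLinearEquiv.coe_ofBijective _ _ _⟩
    · intro a b hab
      have hab' : (fderiv ℝ F (0, (qd, yd)) ∘L .inr ℝ _ _) a =
        (fderiv ℝ F (0, (qd, yd)) ∘L .inr ℝ _ _) b := hab
      rw [hB, hB] at hab'
      exact toCoord_injective (Matrix.mulVec_injective_iff_isUnit.2 hunit hab')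
    · intro v
      refine ⟨toParam ((Fisher k x σ0 qd yd)⁻¹ *ᵥ v), (hB _).trans ?_⟩
      rw [toCoord_toParam, Matrix.mulVec_mulVec, Matrix.mul_nonsing_inv _ hdet,
        Matrix.one_mulVec]
  have hev := hstrict.eventually_apply_eq_iff_implicitFunctionOfProdDomain hinv
  refine ⟨hstrict.implicitFunctionOfProdDomain hinv, _,
    (hstrict.hasStrictFDerivAt_implicitFunctionOfProdDomain hinv).hasFDerivAt,
    hev.self_of_nhds.1 rfl, ?_, ?_⟩
  · simpa only [hF0] using hev
  · set δ := (-(fderiv ℝ F (0, (qd, yd)) ∘L .inr ℝ _ _).inverse ∘L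
      (fderiv ℝ F (0, (qd, yd)) ∘L .inl ℝ _ _)) (0, 1)
    have hδ' : δ = -((fderiv ℝ F (0, (qd, yd)) ∘L .inr ℝ _ _).inverse
      ((fderiv ℝ F (0, (qd, yd)) ∘L .inl ℝ _ _) (0, 1))) := rfl
    have h1 : Fisher k x σ0 qd yd *ᵥ toCoord δ = - rho0 d qd := by
      rw [← hB, hδ', map_neg, hinv.self_apply_inverse, hA]
    have h2 := congrArg (fun w => (Fisher k x σ0 qd yd)⁻¹ *ᵥ w) h1
    simpa [Matrix.mulVec_mulVec, Matrix.nonsing_inv_mul _ hdet, Matrix.mulVec_neg] using h2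

/-- Closed `W†`-balls around `m†` are arbitrarily small; this needs all weights to be nonzero. -/
lemma exists_Wnorm_ball_subset {qd : Fin Ns → ℝ} (hqd : ∀ n, qd n ≠ 0)
    {yd : Fin Ns → EuclideanSpace ℝ (Fin d)}
    {s : Set ((Fin Ns → ℝ) × (Fin Ns → EuclideanSpace ℝ (Fin d)))} (hs : s ∈ 𝓝 (qd, yd)) :
    ∃ r > 0, ∀ m, Wnorm qd (m - (qd, yd)) ≤ 3 / 2 * r → m ∈ s := by
  obtain ⟨R, hR, hRs⟩ := Metric.mem_nhds_iff.1 hs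
  have hq : ∀ n, 0 < |qd n| := fun n => abs_pos.2 (hqd n)
  have hc : Continuous fun r : ℝ => (3 / 2 * r) ^ 2 := by fun_prop
  have hsmall : ∀ᶠ r : ℝ in 𝓝 0, ∀ n,
      (3 / 2 * r) ^ 2 < R ^ 2 / (4 * |qd n|) ∧ (3 / 2 * r) ^ 2 < |qd n| * R ^ 2 := by
    refine eventually_all.2 fun n => ?_
    have h1 : 0 < R ^ 2 / (4 * |qd n|) := by have := hq n; positivity
    have h2 : 0 < |qd n| * R ^ 2 := by have := hq n; positivity
    exact (hc.continuousAt.eventually (gt_mem_nhds (by simpa using h1))).and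
      (hc.continuousAt.eventually (gt_mem_nhds (by simpa using h2)))
  obtain ⟨r, hr, hr0⟩ := ((hsmall.filter_mono nhdsWithin_le_nhds).and
    (self_mem_nhdsWithin : Set.Ioi (0 : ℝ) ∈ 𝓝[>] 0)).exists
  refine ⟨r, hr0, fun m hm => hRs ?_⟩
  have hW : WnormSq qd (m - (qd, yd)) ≤ (3 / 2 * r) ^ 2 := (Real.sqrt_le_iff.1 hm).2
  have hn1 : ∀ n ∈ Finset.univ, 0 ≤ (m - (qd, yd)).1 n ^ 2 / (4 * |qd n|) := fun n _ => by
    have := hq n; positivity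
  have hn2 : ∀ n ∈ Finset.univ, 0 ≤ |qd n| * ‖(m - (qd, yd)).2 n‖ ^ 2 := fun n _ => by
    have := hq n; positivity
  unfold WnormSq at hW
  rw [Metric.mem_ball, Prod.dist_eq, max_lt_iff, dist_pi_lt_iff hR, dist_pi_lt_iff hR]
  refine ⟨fun n => ?_, fun n => ?_⟩
  · have h1 := Finset.single_le_sum hn1 (Finset.mem_univ n)
    have h2 := Finset.sum_nonneg hn2
    have h3 : (m - (qd, yd)).1 n ^ 2 / (4 * |qd n|) < R ^ 2 / (4 * |qd n|) := by
      linarith [(hr n).1]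
    rw [div_lt_div_iff_of_pos_right (by have := hq n; positivity)] at h3
    rw [Real.dist_eq]
    exact abs_lt_of_sq_lt_sq h3 hR.le
  · have h1 := Finset.single_le_sum hn2 (Finset.mem_univ n)
    have h2 := Finset.sum_nonneg hn1
    have h3 : |qd n| * ‖(m - (qd, yd)).2 n‖ ^ 2 < |qd n| * R ^ 2 := by
      linarith [(hr n).2]
    rw [dist_eq_norm]
    exact lt_of_pow_lt_pow_left₀ 2 hR.le (lt_of_mul_lt_mul_left h3 (hq n).le)

/-- Componentwise reading of the stationarity equation: the `q`-rows say that the certificate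
interpolates the signs, the `y`-rows that its gradient vanishes at the positions. -/
lemma combo_of_Smap_eq_zero {σ0 : Fin No → ℝ}
    {md m : (Fin Ns → ℝ) × (Fin Ns → EuclideanSpace ℝ (Fin d))} {ε : Fin No → ℝ} {β : ℝ}
    (hβ : β ≠ 0) (hS : Smap k x σ0 md ε β m = 0) (hm : ∀ n, m.1 n ≠ 0) (n : Fin Ns) :
    combo (fun j => k (x j)) (fun j => β⁻¹ * ((σ0 j)⁻¹ *
        (Gfun k x md j + ε j - Gfun k x m j))) (m.2 n) = Real.sign (md.1 n) ∧
      comboD (fun j => k (x j)) (fun j => β⁻¹ * ((σ0 j)⁻¹ *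
        (Gfun k x md j + ε j - Gfun k x m j))) (m.2 n) = 0 := by
  constructor
  · have h := congrFun hS (Sum.inl n)
    simp only [Smap_apply, Jmat, Matrix.of_apply, Sum.elim_inl, rho0, Pi.zero_apply] at h
    have h2 : combo (fun j => k (x j)) (fun j => β⁻¹ * ((σ0 j)⁻¹ *
        (Gfun k x md j + ε j - Gfun k x m j))) (m.2 n) =
        -β⁻¹ * ∑ j, k (x j) (m.2 n) * ((Gfun k x m j - Gfun k x md j - ε j) / σ0 j) := by
      rw [combo, Finset.mul_sum]
      exact Finset.sum_congr rfl fun j _ => by rw [div_eq_mul_inv]; ring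
    rw [h2, eq_neg_of_add_eq_zero_left h]
    field_simp
  · refine ContinuousLinearMap.ext fun v => ?_
    rw [clm_eq_sum, _root_.zero_apply]
    refine Finset.sum_eq_zero fun i _ => ?_
    have h := congrFun hS (Sum.inr (n, i))
    simp only [Smap_apply, Jmat, Matrix.of_apply, Sum.elim_inr, rho0, Pi.zero_apply, mul_zero,
      add_zero, mul_assoc, ← Finset.mul_sum] at h
    have h1 := (mul_eq_zero.1 h).resolve_left (hm n)
    have h2 : comboD (fun j => k (x j)) (fun j => β⁻¹ * ((σ0 j)⁻¹ *
        (Gfun k x md j + ε j - Gfun k x m j))) (m.2 n) (EuclideanSpace.single i 1) =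
        -β⁻¹ * ∑ j, fderiv ℝ (k (x j)) (m.2 n) (EuclideanSpace.single i 1) *
          ((Gfun k x m j - Gfun k x md j - ε j) / σ0 j) := by
      rw [comboD, _root_.sum_apply, Finset.mul_sum]
      refine Finset.sum_congr rfl fun j _ => ?_
      rw [_root_.smul_apply, smul_eq_mul, div_eq_mul_inv]; ring
    rw [h2, h1]; simp

/-- First order expansion of the dual variable `β⁻¹ Σ₀⁻¹ (G(m†) + ε - G(m̂))` with `ε = β u`. -/
lemma tendsto_dual (hk : ∀ x, ContDiff ℝ 3 (k x)) {σ0 : Fin No → ℝ} {qd : Fin Ns → ℝ}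
    {yd : Fin Ns → EuclideanSpace ℝ (Fin d)}
    {ψ : (Fin No → ℝ) × ℝ → (Fin Ns → ℝ) × (Fin Ns → EuclideanSpace ℝ (Fin d))}
    {ψ' : ((Fin No → ℝ) × ℝ) →L[ℝ] (Fin Ns → ℝ) × (Fin Ns → EuclideanSpace ℝ (Fin d))}
    (hψ : HasFDerivAt ψ ψ' 0) (hψ0 : ψ 0 = (qd, yd)) :
    Tendsto (fun t : (Fin No → ℝ) × ℝ => fun j => t.2⁻¹ * ((σ0 j)⁻¹ *
        (Gfun k x (qd, yd) j + (t.2 • t.1) j - Gfun k x (ψ (t.2 • t.1, t.2)) j)))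
      (𝓝 0 ×ˢ 𝓝[>] 0)
      (𝓝 fun j => -((σ0 j)⁻¹ * (Jmat k x qd yd *ᵥ toCoord (ψ' (0, 1))) j)) := by
  refine tendsto_pi_nhds.2 fun j => ?_
  have h2 : Tendsto (fun t : (Fin No → ℝ) × ℝ => t.2) (𝓝 0 ×ˢ 𝓝[>] 0) (𝓝 0) :=
    tendsto_snd.mono_right nhdsWithin_le_nhds
  have h1 : Tendsto (fun t : (Fin No → ℝ) × ℝ => t.1) (𝓝 0 ×ˢ 𝓝[>] (0 : ℝ)) (𝓝 0) := tendsto_fst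
  have hpos : ∀ᶠ t : (Fin No → ℝ) × ℝ in 𝓝 0 ×ˢ 𝓝[>] 0, 0 < t.2 :=
    tendsto_snd.eventually (self_mem_nhdsWithin : Set.Ioi (0 : ℝ) ∈ 𝓝[>] 0)
  obtain ⟨L, hL, hLapp⟩ := Gfun_hasFDerivAt (x := x) hk qd yd j
  rw [← hψ0] at hL
  have hG : HasFDerivAt (fun p => Gfun k x (ψ p) j) (L.comp ψ') 0 := hL.comp 0 hψ
  have hd : Tendsto (fun t : (Fin No → ℝ) × ℝ => (t.2 • t.1, t.2)) (𝓝 0 ×ˢ 𝓝[>] (0 : ℝ))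
      (𝓝 (0 : (Fin No → ℝ) × ℝ)) := by
    have h := (h2.smul h1).prodMk_nhds h2
    rwa [smul_zero] at h
  have hcd : Tendsto (fun t : (Fin No → ℝ) × ℝ => t.2⁻¹ • (t.2 • t.1, t.2))
      (𝓝 0 ×ˢ 𝓝[>] (0 : ℝ)) (𝓝 (0, 1)) := by
    refine Tendsto.congr' ?_ (h1.prodMk_nhds tendsto_const_nhds)
    filter_upwards [hpos] with t ht
    simp [smul_smul, ht.ne']
  have hlim := (hasFDerivWithinAt_univ.2 hG).lim hd (Eventually.of_forall fun _ => Set.mem_univ _)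
    hcd
  have h1j : Tendsto (fun t : (Fin No → ℝ) × ℝ => t.1 j) (𝓝 0 ×ˢ 𝓝[>] (0 : ℝ)) (𝓝 0) :=
    ((continuous_apply j).tendsto 0).comp h1
  have hfin := (h1j.sub hlim).const_mul (σ0 j)⁻¹
  rw [ContinuousLinearMap.comp_apply, hLapp, zero_sub, mul_neg] at hfin
  refine hfin.congr' ?_
  filter_upwards [hpos] with t ht
  simp only [zero_add, hψ0, smul_eq_mul, Pi.smul_apply]
  have := ht.ne'
  field_simp
  ring

lemma exists_delta_of_eventually {α : Type*} [SeminormedAddCommGroup α] {Q : α × ℝ → Prop}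
    (h : ∀ᶠ t in 𝓝 0 ×ˢ 𝓝[>] 0, Q t) :
    ∃ δ > 0, ∀ u β, ‖u‖ < δ → 0 < β → β < δ → Q (u, β) := by
  obtain ⟨s1, hs1, s2, hs2, hss⟩ := Filter.mem_prod_iff.1 h
  obtain ⟨δ1, hδ1, hb1⟩ := Metric.mem_nhds_iff.1 hs1
  obtain ⟨δ2, hδ2, hb2⟩ := mem_nhdsGT_iff_exists_Ioo_subset.1 hs2
  refine ⟨min δ1 δ2, lt_min hδ1 hδ2, fun u β hu hβ hβ' => hss ⟨hb1 ?_, hb2 ?_⟩⟩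
  · simpa using hu.trans_le (min_le_left _ _)
  · exact ⟨hβ, hβ'.trans_le (min_le_right _ _)⟩

/-- The weighted norm `‖·‖_{Σ₀⁻¹}` dominates the sup norm up to a constant. -/
lemma abs_le_mul_enorm {σ0 : Fin No → ℝ} (hσ0 : ∀ j, 0 < σ0 j) (ε : Fin No → ℝ) (j : Fin No) :
    |ε j| ≤ (1 + ∑ j, Real.sqrt (σ0 j)) * _root_.enorm σ0 ε := by
  have h1 : ε j ^ 2 / σ0 j ≤ ∑ i, ε i ^ 2 / σ0 i :=
    Finset.single_le_sum (f := fun i => ε i ^ 2 / σ0 i)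
      (fun i _ => div_nonneg (sq_nonneg _) (hσ0 i).le) (Finset.mem_univ j)
  have h3 : |ε j| ≤ Real.sqrt (σ0 j) * _root_.enorm σ0 ε := by
    rw [_root_.enorm, ← Real.sqrt_mul (hσ0 j).le]
    refine Real.abs_le_sqrt ?_
    rw [div_le_iff₀ (hσ0 j)] at h1
    linarith
  have h4 : Real.sqrt (σ0 j) ≤ ∑ i, Real.sqrt (σ0 i) :=
    Finset.single_le_sum (f := fun i => Real.sqrt (σ0 i))
      (fun i _ => Real.sqrt_nonneg _) (Finset.mem_univ j)
  exact h3.trans (mul_le_mul_of_nonneg_right (by linarith) (Real.sqrt_nonneg _))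

end Branch

end Aux

/-- **Admissibility of the noisy certificate.** If the vanishing-derivative pre-certificate
`η† = K* Σ₀⁻¹ G'(m†) I₀⁻¹(ρ;0)` is `θ`-admissible for `µ†`, then there are constants
`C₁, C₂, r̂ > 0` such that, for all small-enough data `(ε, β)` in the sense of the two stated
inequalities, the stationarity equation has a unique solution `m̂` in the `(3/2)r̂`-ball, and the
associated certificate `η̂ = β⁻¹ K* Σ₀⁻¹(G(m†) + ε − G(m̂))` is `θ/2`-admissible for `µ̂`. -/
theorem stmt_8 (d dO No Ns : ℕ) (hd : 1 ≤ d) (hNs : 0 < Ns)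
    (Ωs : Set (EuclideanSpace ℝ (Fin d))) (hΩc : IsCompact Ωs)
    (hΩi : (interior Ωs).Nonempty)
    (Ωo : Set (EuclideanSpace ℝ (Fin dO))) (hΩo : IsCompact Ωo)
    (k : EuclideanSpace ℝ (Fin dO) → EuclideanSpace ℝ (Fin d) → ℝ)
    (hk : ∀ x, ContDiff ℝ 3 (k x))
    (x : Fin No → EuclideanSpace ℝ (Fin dO)) (hx : ∀ j, x j ∈ Ωo)
    (σ0 : Fin No → ℝ) (hσ0 : ∀ j, 0 < σ0 j)
    (Ck Ck' Ck'' Ck''' : ℝ)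
    (hCk : ∀ xx ∈ Ωo, ∀ yy ∈ Ωs, |k xx yy| ≤ Ck)
    (hCk1 : ∀ xx ∈ Ωo, ∀ yy ∈ Ωs, ‖fderiv ℝ (k xx) yy‖ ≤ Ck')
    (hCk2 : ∀ xx ∈ Ωo, ∀ yy ∈ Ωs, ‖iteratedFDeriv ℝ 2 (k xx) yy‖ ≤ Ck'')
    (hCk3 : ∀ xx ∈ Ωo, ∀ yy ∈ Ωs, ‖iteratedFDeriv ℝ 3 (k xx) yy‖ ≤ Ck''')
    (qd : Fin Ns → ℝ) (hqd : ∀ n, qd n ≠ 0)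
    (yd : Fin Ns → EuclideanSpace ℝ (Fin d)) (hyd : ∀ n, yd n ∈ interior Ωs)
    (hydinj : Function.Injective yd)
    (hrank : Function.Injective (Jmat k x qd yd).mulVec)
    (θ : ℝ) (hθ : θ ∈ Set.Ioc (0 : ℝ) 1)
    (ηd : EuclideanSpace ℝ (Fin d) → ℝ)
    (hηd : ηd = fun z => ∑ j, (σ0 j)⁻¹ *
        ((Jmat k x qd yd) *ᵥ ((Fisher k x σ0 qd yd)⁻¹ *ᵥ rho0 d qd)) j * k (x j) z)
    (hadm : Admissible Ωs (fun n => |qd n|) θ qd yd ηd) :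
    ∃ C₁ > (0 : ℝ), ∃ C₂ > (0 : ℝ), ∃ rhat > (0 : ℝ),
      ∀ (ε : Fin No → ℝ) (β : ℝ), 0 < β →
        C₁ * (enorm σ0 ε + β) ≤ Real.sqrt (θ / 32) →
        C₂ * β⁻¹ * ((enorm σ0 ε + β) ^ 2 + enorm σ0 ε) ≤ θ ^ 2 / 32 →
        (∃ mhat : (Fin Ns → ℝ) × (Fin Ns → EuclideanSpace ℝ (Fin d)),
            (Wnorm qd (mhat - (qd, yd)) ≤ 3 / 2 * rhat ∧
                Smap k x σ0 (qd, yd) ε β mhat = 0) ∧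
            ∀ m', Wnorm qd (m' - (qd, yd)) ≤ 3 / 2 * rhat →
              Smap k x σ0 (qd, yd) ε β m' = 0 → m' = mhat) ∧
        ∀ mhat : (Fin Ns → ℝ) × (Fin Ns → EuclideanSpace ℝ (Fin d)),
          Wnorm qd (mhat - (qd, yd)) ≤ 3 / 2 * rhat →
          Smap k x σ0 (qd, yd) ε β mhat = 0 →
          Admissible Ωs (fun n => |qd n|) (θ / 2) mhat.1 mhat.2
            (fun z => β⁻¹ * ∑ j, (σ0 j)⁻¹ *
              (Gfun k x (qd, yd) j + ε j - Gfun k x mhat j) * k (x j) z) := by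
  have hθ0 : 0 < θ := hθ.1
  set κ : Fin No → EuclideanSpace ℝ (Fin d) → ℝ := fun j => k (x j) with hκdef
  have hκ : ∀ j, ContDiff ℝ 3 (κ j) := fun j => hk (x j)
  obtain ⟨ψ, ψ', hψ, hψ0, hiff, hψ'⟩ := exists_solution_branch (x := x) hk hσ0 hrank
  set ad : Fin No → ℝ := fun j =>
    (σ0 j)⁻¹ * (Jmat k x qd yd *ᵥ ((Fisher k x σ0 qd yd)⁻¹ *ᵥ rho0 d qd)) j with had
  have hηad : ηd = combo κ ad := hηd
  rw [hηad] at hadm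
  -- radius of the uniqueness ball
  obtain ⟨sp, hsp, sm, hsm, hsub⟩ := mem_nhds_prod_iff.1 hiff
  obtain ⟨r, hr, hrsub⟩ := exists_Wnorm_ball_subset hqd hsm
  have hψcont : Filter.Tendsto ψ (nhds 0) (nhds (qd, yd)) := by
    simpa [hψ0] using hψ.continuousAt.tendsto
  have hball : ∀ᶠ p in nhds (0 : (Fin No → ℝ) × ℝ), Wnorm qd (ψ p - (qd, yd)) ≤ 3 / 2 * r := by
    have hc : Continuous fun m : (Fin Ns → ℝ) × (Fin Ns → EuclideanSpace ℝ (Fin d)) =>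
        Wnorm qd (m - (qd, yd)) := by
      unfold Wnorm WnormSq
      simp only [Prod.fst_sub, Prod.snd_sub, Pi.sub_apply]
      fun_prop
    have h0 : Wnorm qd ((qd, yd) - (qd, yd)) < 3 / 2 * r := by
      rw [sub_self]
      simpa [Wnorm, WnormSq] using hr
    exact (hψcont.eventually (hc.continuousAt.eventually (gt_mem_nhds h0))).mono
      fun p hp => hp.le
  have hsign : ∀ᶠ p in nhds (0 : (Fin No → ℝ) × ℝ), ∀ n,
      Real.sign ((ψ p).1 n) = Real.sign (qd n) := by
    refine Filter.eventually_all.2 fun n => ?_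
    have hc : Filter.Tendsto (fun p => (ψ p).1 n) (nhds 0) (nhds (qd n)) :=
      (((continuous_apply n).comp continuous_fst).tendsto (qd, yd)).comp hψcont
    rcases lt_or_gt_of_ne (hqd n) with h | h
    · filter_upwards [hc.eventually (gt_mem_nhds h)] with p hp
      rw [Real.sign_of_neg h, Real.sign_of_neg hp]
    · filter_upwards [hc.eventually (lt_mem_nhds h)] with p hp
      rw [Real.sign_of_pos h, Real.sign_of_pos hp]
  -- everything that only needs `(ε, β)` small, pulled back along `(u, β) ↦ (β u, β)`
  have h2 : Filter.Tendsto (fun t : (Fin No → ℝ) × ℝ => t.2)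
      (nhds 0 ×ˢ nhdsWithin 0 (Set.Ioi 0)) (nhds 0) :=
    Filter.tendsto_snd.mono_right nhdsWithin_le_nhds
  have hscale : Filter.Tendsto (fun t : (Fin No → ℝ) × ℝ => (t.2 • t.1, t.2))
      (nhds 0 ×ˢ nhdsWithin (0 : ℝ) (Set.Ioi 0)) (nhds (0 : (Fin No → ℝ) × ℝ)) := by
    have h := (h2.smul (Filter.tendsto_fst (f := nhds (0 : Fin No → ℝ)))).prodMk_nhds h2
    rwa [smul_zero] at h
  have hdual := tendsto_dual (x := x) (σ0 := σ0) hk hψ hψ0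
  have hlimit : (fun j => -((σ0 j)⁻¹ * (Jmat k x qd yd *ᵥ toCoord (ψ' (0, 1))) j)) = ad := by
    funext j
    rw [hψ', Matrix.mulVec_neg]
    simp [had]
  rw [hlimit] at hdual
  have hpos : Filter.Tendsto (fun t : (Fin No → ℝ) × ℝ => (ψ (t.2 • t.1, t.2)).2)
      (nhds 0 ×ˢ nhdsWithin (0 : ℝ) (Set.Ioi 0)) (nhds yd) :=
    (continuous_snd.tendsto (qd, yd)).comp (hψcont.comp hscale)
  have hstab := (hdual.prodMk_nhds hpos).eventually
    (eventually_admissible hκ hNs hΩc hqd hyd hydinj hθ0 hadm)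
  have hsp2 : ∀ᶠ p in nhds (0 : (Fin No → ℝ) × ℝ), p ∈ sp := hsp
  have hall := hstab.and (hscale.eventually (hball.and (hsign.and hsp2)))
  obtain ⟨δ, hδ, hδall⟩ := exists_delta_of_eventually hall
  -- `S` dominates the passage from the weighted norm to the sup norm on data
  set S : ℝ := 1 + ∑ j, Real.sqrt (σ0 j) with hS
  have hS0 : 0 < S := by
    have : 0 ≤ ∑ j, Real.sqrt (σ0 j) := Finset.sum_nonneg fun j _ => Real.sqrt_nonneg _
    linarith
  have hen := abs_le_mul_enorm hσ0
  -- the first smallness condition amounts to `2 (‖ε‖ + β) ≤ δ`; the second one, after dropping the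
  -- square, to `2 S ‖ε‖ ≤ δ β`
  have hA : 0 < Real.sqrt (θ / 32) := Real.sqrt_pos.2 (by positivity)
  refine ⟨2 * Real.sqrt (θ / 32) / δ, by positivity, 2 * S * (θ ^ 2 / 32) / δ, by positivity,
    r, hr, fun ε β hβ hC1 hC2 => ?_⟩
  have he0 : 0 ≤ enorm σ0 ε := Real.sqrt_nonneg _
  have hβδ : β < δ := by
    rw [div_mul_eq_mul_div, div_le_iff₀ hδ] at hC1
    have h1 : 2 * (enorm σ0 ε + β) ≤ δ := by
      refine le_of_mul_le_mul_left ?_ hA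
      linarith
    linarith
  have heδ : S * enorm σ0 ε ≤ β * (δ / 2) := by
    have hB : 0 < θ ^ 2 / 32 := by positivity
    have h1 : 2 * S * (θ ^ 2 / 32) / δ * β⁻¹ * enorm σ0 ε ≤ θ ^ 2 / 32 := by
      refine le_trans (mul_le_mul_of_nonneg_left ?_ (by positivity)) hC2
      linarith [sq_nonneg (enorm σ0 ε + β)]
    have h3 : 2 * S * (θ ^ 2 / 32) / δ * β⁻¹ * enorm σ0 ε =
        (θ ^ 2 / 32) * (2 * (S * enorm σ0 ε)) / (δ * β) := by
      field_simp
    rw [h3, div_le_iff₀ (by positivity)] at h1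
    have := le_of_mul_le_mul_left h1 hB
    linarith
  have hu : ‖β⁻¹ • ε‖ < δ := by
    refine lt_of_le_of_lt ((pi_norm_le_iff_of_nonneg (by positivity : 0 ≤ δ / 2)).2 fun j => ?_)
      (half_lt_self hδ)
    rw [Pi.smul_apply, smul_eq_mul, Real.norm_eq_abs, abs_mul, abs_of_pos (inv_pos.2 hβ),
      inv_mul_le_iff₀ hβ]
    exact (hen ε j).trans heδ
  obtain ⟨hadm', hball', hsign', hsp'⟩ := hδall (β⁻¹ • ε) β hu hβ hβδ
  simp only [smul_inv_smul₀ hβ.ne' ε] at hadm' hball' hsign' hsp'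
  have huniq : ∀ m, Wnorm qd (m - (qd, yd)) ≤ 3 / 2 * r →
      (Smap k x σ0 (qd, yd) ε β m = 0 ↔ ψ (ε, β) = m) := fun m hm =>
    hsub (Set.mk_mem_prod hsp' (hrsub m hm))
  have hsol := (huniq _ hball').2 rfl
  refine ⟨⟨ψ (ε, β), ⟨hball', hsol⟩, fun m' hm' hSm' => ((huniq m' hm').1 hSm').symm⟩, ?_⟩
  intro mhat hm hSm
  obtain rfl := (huniq mhat hm).1 hSm
  have hne : ∀ n, (ψ (ε, β)).1 n ≠ 0 := fun n h => by
    have := hsign' n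
    rw [h, Real.sign_zero] at this
    exact hqd n (Real.sign_eq_zero_iff.1 this.symm)
  have hcombo := combo_of_Smap_eq_zero hβ.ne' hSm hne
  have hη : (fun z => β⁻¹ * ∑ j, (σ0 j)⁻¹ *
      (Gfun k x (qd, yd) j + ε j - Gfun k x (ψ (ε, β)) j) * k (x j) z) =
      combo κ (fun j => β⁻¹ * ((σ0 j)⁻¹ *
        (Gfun k x (qd, yd) j + ε j - Gfun k x (ψ (ε, β)) j))) := by
    funext z
    rw [combo, Finset.mul_sum]
    exact Finset.sum_congr rfl fun j _ => by rw [hκdef]; ring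
  rw [hη]
  exact ⟨fun n => ((hcombo n).1).trans (hsign' n).symm,
    hadm' (fun n => (hcombo n).1) fun n => (hcombo n).2⟩
end
end
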